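/- Let (T,f) be a Hubbard tree with kneading sequence ν and let ρ = ρ_ν. If z₁ is a tame characteristic branch point of exact period m, then m occurs in the internal address of ν and the number of arms of z₁ equals q(m). Conversely, for any entry m of the internal address of ν with q(m) ≥ 3, and such that the critical orbit is not periodic of period m, the Hubbard tree contains a tame branch point of exact period m with q(m) arms. -/

import Mathlib

/- Common definitions for formalizing "Admissibility of kneading sequences and
structure of Hubbard trees for quadratic polynomials" by Bruin–Schleicher. -/

namespace HubbardTrees

/-- The symbols `0`, `1`, `*` used for itineraries and kneading sequences. -/
inductive Sym : Type
  | zero : Sym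
  | one : Sym
  | star : Sym
deriving DecidableEq

/-- `A` is an arc in `X` joining `x` and `y` (a point if `x = y`, otherwise a
homeomorphic image of `[0,1]` with endpoints `x` and `y`). -/
def IsArcBetween {X : Type*} [TopologicalSpace X] (A : Set X) (x y : X) : Prop :=
  (x = y ∧ A = {x}) ∨
  (x ≠ y ∧ ∃ γ : Path x y, Topology.IsEmbedding ⇑γ ∧ Set.range ⇑γ = A)

/-- The global arms at `x`: the connected components of `X \ {x}`. -/
def arms {X : Type*} [TopologicalSpace X] (x : X) : Set (Set X) :=
  {C | ∃ y, y ≠ x ∧ C = connectedComponentIn {x}ᶜ y}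

/-- The global arm at `x` containing `y` (for `y ≠ x`): the component of `X \ {x}`
containing `y`.  Local arms at `x` being germs of global arms, we represent the local
arm at `x` pointing towards `y` by this set. -/
def armTo {X : Type*} [TopologicalSpace X] (x y : X) : Set X :=
  connectedComponentIn {x}ᶜ y

/-- `x` is an endpoint: it has exactly one arm. -/
def IsEndpoint {X : Type*} [TopologicalSpace X] (x : X) : Prop :=
  (arms x).ncard = 1

/-- `x` is a branch point: it has at least three arms. -/
def IsBranchPt {X : Type*} [TopologicalSpace X] (x : X) : Prop :=
  3 ≤ (arms x).ncard

/-- `f` maps the set `A` homeomorphically onto its image. -/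
def MapsHomeoOn {X : Type*} [TopologicalSpace X] (f : X → X) (A : Set X) : Prop :=
  Topology.IsEmbedding (A.restrict f)

/-- `f` is a local homeomorphism onto its image at `x`. -/
def IsLocalHomeoAt {X : Type*} [TopologicalSpace X] (f : X → X) (x : X) : Prop :=
  ∃ U : Set X, IsOpen U ∧ x ∈ U ∧ Topology.IsEmbedding (U.restrict f)

/-- `g` sends the local arm at `x` represented by the global arm `C` to the local
arm at `g x` represented by `C'` (germ condition: some initial piece of `C` at `x`
is mapped into `C'`). -/
def MapsLocalArm {X : Type*} [TopologicalSpace X] (g : X → X) (x : X) (C C' : Set X) : Prop :=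
  C ∈ arms x ∧ C' ∈ arms (g x) ∧ ∃ U ∈ nhds x, g '' (C ∩ U) ⊆ C'

/-- `z` is periodic under `f` with exact period `n`. -/
def ExactPeriod {Y : Type*} (f : Y → Y) (z : Y) (n : ℕ) : Prop :=
  1 ≤ n ∧ f^[n] z = z ∧ ∀ k, 1 ≤ k → k < n → f^[k] z ≠ z

/-- The first return map `f^[n]` of the fixed point `z` of `f^[n]` permutes all the
local arms at `z` transitively in a single cycle. -/
def ArmsTransitive {X : Type*} [TopologicalSpace X] (f : X → X) (n : ℕ) (z : X) : Prop :=
  ∀ C ∈ arms z, ∀ C' ∈ arms z, ∃ j : ℕ, MapsLocalArm (f^[n * j]) z C C'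

/-- An (abstract) Hubbard tree: a finite topological tree `X` together with a
continuous surjection `f` and a critical point `c0`, subject to the axioms of
Bruin–Schleicher. -/
structure HubbardTree (X : Type*) [TopologicalSpace X] : Type _ where
  /-- the dynamics -/
  f : X → X
  /-- the critical point -/
  c0 : X
  compact : CompactSpace X
  t2 : T2Space X
  conn : ConnectedSpace X
  /-- the unique arc `[x,y]` joining two points -/
  arc : X → X → Set X
  arc_isArc : ∀ x y : X, IsArcBetween (arc x y) x y
  arc_unique : ∀ (x y : X) (A : Set X), IsArcBetween A x y → A = arc x y
  -- finiteness of the tree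
  arms_finite : ∀ x : X, (arms x).Finite
  branch_finite : Set.Finite {x : X | IsBranchPt x}
  endpoint_finite : Set.Finite {x : X | IsEndpoint x}
  cont : Continuous f
  surj : Function.Surjective f
  /-- every point has at most two inverse images -/
  two_preimages : ∀ y : X, ∃ a b : X, f ⁻¹' {y} ⊆ {a, b}
  /-- local homeomorphism onto its image away from the critical point -/
  local_homeo : ∀ x : X, x ≠ c0 → IsLocalHomeoAt f x
  /-- all endpoints lie on the critical orbit -/
  endpoints_on_orbit : ∀ x : X, IsEndpoint x → ∃ k : ℕ, f^[k] c0 = x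
  /-- the critical point is periodic or preperiodic -/
  crit_preperiodic : ∃ k n : ℕ, 1 ≤ n ∧ f^[k + n] c0 = f^[k] c0
  /-- the critical point is not fixed -/
  crit_not_fixed : f c0 ≠ c0
  /-- expansivity -/
  expansive : ∀ x y : X, x ≠ y →
    (IsBranchPt x ∨ ∃ k : ℕ, f^[k] c0 = x) →
    (IsBranchPt y ∨ ∃ k : ℕ, f^[k] c0 = y) →
    ∃ n : ℕ, c0 ∈ f^[n] '' (arc x y)

namespace HubbardTree

variable {X : Type*} [TopologicalSpace X] (H : HubbardTree X)

/-- The critical value `c₁ = f(c₀)`. -/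
def c1 : X := H.f H.c0

/-- The component `T₁` of `T \ {c₀}` containing the critical value. -/
def T1 : Set X := connectedComponentIn {H.c0}ᶜ H.c1

open Classical in
/-- The symbol (`0`, `1` or `*`) attached to a point of the tree. -/
noncomputable def symOf (x : X) : Sym :=
  if x = H.c0 then Sym.star else if x ∈ H.T1 then Sym.one else Sym.zero

/-- The itinerary of `x`: a sequence of symbols, 1-indexed (the value at index `0`
is irrelevant); entry `k ≥ 1` is the symbol of `f^[k-1] x`. -/
noncomputable def itin (x : X) : ℕ → Sym :=
  fun k => H.symOf (H.f^[k - 1] x)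

/-- The kneading sequence: the itinerary of the critical value (1-indexed). -/
noncomputable def kneading : ℕ → Sym := H.itin H.c1

/-- `z` is the characteristic point of its periodic orbit: `c₁` lies in one
component of `X \ {z}` while `c₀` and all other points of the orbit lie in a
different component. -/
def IsCharacteristic (z : X) : Prop :=
  ∃ Cv Cz : Set X, Cv ∈ arms z ∧ Cz ∈ arms z ∧ Cv ≠ Cz ∧
    H.c1 ∈ Cv ∧ H.c0 ∈ Cz ∧ ∀ k : ℕ, H.f^[k] z ≠ z → H.f^[k] z ∈ Cz

/-- The first return map fixes the local arm at `z` pointing to the critical point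
and permutes all other local arms transitively in a single cycle. -/
def OtherArmsTransitive (n : ℕ) (z : X) : Prop :=
  ∀ C ∈ arms z, C ≠ armTo z H.c0 → ∀ C' ∈ arms z, C' ≠ armTo z H.c0 →
    ∃ j : ℕ, MapsLocalArm (H.f^[n * j]) z C C'

/-- `z` is the characteristic point of an evil periodic orbit of branch points of
exact period `n`. -/
def IsEvilOrbit (z : X) (n : ℕ) : Prop :=
  ExactPeriod H.f z n ∧ (∀ k : ℕ, IsBranchPt (H.f^[k] z)) ∧
    H.IsCharacteristic z ∧ ¬ ArmsTransitive H.f n z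

/-- `x` is precritical with `Step(x) = k`: `k ≥ 1` is minimal with `f^[k] x = c₁`. -/
def Step (x : X) (k : ℕ) : Prop :=
  1 ≤ k ∧ H.f^[k] x = H.c1 ∧ ∀ j, 1 ≤ j → j < k → H.f^[j] x ≠ H.c1

/-- `x` is the closest precritical point `ζ_k`. -/
def IsClosestPrecritical (x : X) (k : ℕ) : Prop :=
  H.Step x k ∧ ∀ j, 1 ≤ j → j < k → H.c1 ∉ H.f^[j] '' (H.arc H.c1 x)

/-- `x` is the earliest precritical point on the set `A`, with `Step(x) = k`:
it is a precritical point on `A` of minimal Step. -/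
def IsEarliestPrecriticalOn (A : Set X) (x : X) (k : ℕ) : Prop :=
  x ∈ A ∧ H.Step x k ∧ ∀ y ∈ A, ∀ j : ℕ, H.Step y j → k ≤ j

/-- Marked points: branch points and points of the critical orbit. -/
def MarkedPt (x : X) : Prop :=
  IsBranchPt x ∨ ∃ k : ℕ, H.f^[k] H.c0 = x

/-- Two marked points are joined by an edge if the arc between them contains no
further marked point. -/
def IsEdge (x y : X) : Prop :=
  H.MarkedPt x ∧ H.MarkedPt y ∧ x ≠ y ∧
    ∀ w ∈ H.arc x y, H.MarkedPt w → w = x ∨ w = y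

/-- Equivalence of Hubbard trees: a bijection between the marked points which
conjugates the dynamics and preserves edges. -/
def Equivalent {Y : Type*} [TopologicalSpace Y] (H' : HubbardTree Y) : Prop :=
  ∃ φ : X → Y,
    (∀ x : X, H.MarkedPt x → H'.MarkedPt (φ x)) ∧
    (∀ x x' : X, H.MarkedPt x → H.MarkedPt x' → φ x = φ x' → x = x') ∧
    (∀ y : Y, H'.MarkedPt y → ∃ x : X, H.MarkedPt x ∧ φ x = y) ∧
    φ H.c0 = H'.c0 ∧
    (∀ x : X, H.MarkedPt x → φ (H.f x) = H'.f (φ x)) ∧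
    (∀ x x' : X, H.MarkedPt x → H.MarkedPt x' →
      (H.IsEdge x x' ↔ H'.IsEdge (φ x) (φ x')))

end HubbardTree

/-! ### Combinatorics of kneading sequences -/

/-- The function `ρ_ν(n) = inf { k > n : ν_k ≠ ν_{k-n} } ∈ ℕ ∪ {∞}` (sequences are
1-indexed). -/
noncomputable def rho (ν : ℕ → Sym) (n : ℕ) : ℕ∞ :=
  sInf {e : ℕ∞ | ∃ j : ℕ, e = (j : ℕ∞) ∧ n < j ∧ ν j ≠ ν (j - n)}

/-- `RhoOrbit ν k m` means that `m` belongs to the `ρ`-orbit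
`k → ρ(k) → ρ(ρ(k)) → ⋯` of `k` (stopped before reaching `∞`). -/
inductive RhoOrbit (ν : ℕ → Sym) : ℕ → ℕ → Prop
  | refl (k : ℕ) : RhoOrbit ν k k
  | step {k m j : ℕ} : RhoOrbit ν k m → rho ν m = (j : ℕ∞) → RhoOrbit ν k j

/-- `m` occurs in the internal address `1 → ρ(1) → ρ(ρ(1)) → ⋯` of `ν`. -/
def InternalAddress (ν : ℕ → Sym) (m : ℕ) : Prop := RhoOrbit ν 1 m

/-- `ν` is a `*`-periodic kneading sequence of (exact) period `n`:
`ν = overline(1 ν₂ … ν_{n-1} *)`. -/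
def StarPeriodic (ν : ℕ → Sym) (n : ℕ) : Prop :=
  2 ≤ n ∧ ν 1 = Sym.one ∧ ν n = Sym.star ∧
    (∀ k, 1 ≤ k → ν (k + n) = ν k) ∧
    (∀ k, 1 ≤ k → k < n → ν k ≠ Sym.star)

/-- `ν` fails the admissibility condition for period `m`. -/
def FailsAdmissibility (ν : ℕ → Sym) (m : ℕ) : Prop :=
  1 ≤ m ∧
  ¬ InternalAddress ν m ∧
  (∀ k : ℕ, k ∣ m → 1 ≤ k → k < m → rho ν k ≤ (m : ℕ∞)) ∧
  ∃ R r : ℕ, rho ν m = (R : ℕ∞) ∧ 1 ≤ r ∧ r ≤ m ∧ r ≡ R [MOD m] ∧ RhoOrbit ν r m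

open Classical in
/-- The number `q(m)` of arms predicted by the kneading sequence, where
`ρ(m) = R < ∞` and `r ∈ {1,…,m}` is congruent to `R` modulo `m`. -/
noncomputable def qArms (ν : ℕ → Sym) (m R r : ℕ) : ℕ :=
  if RhoOrbit ν r m then (R - r) / m + 1 else (R - r) / m + 2


/-! ### Embeddings into the plane and cyclic order of arms -/

/-- Three points in the plane are in (strictly) counterclockwise position. -/
def Ccw (p q r : ℝ × ℝ) : Prop :=
  0 < (q.1 - p.1) * (r.2 - p.2) - (q.2 - p.2) * (r.1 - p.1)

namespace HubbardTree

variable {X : Type*} [TopologicalSpace X] (H : HubbardTree X)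

/-- Under an embedding `φ` of the tree into the plane, `p` is a first exit point of
the arm `C` at `x` through the circle of radius `ε` around `φ x`: `p = φ y` for a
point `y ∈ C` at distance exactly `ε`, such that the arc from `x` to `y` stays
within distance `< ε` before reaching `y`. -/
def ExitPt (φ : X → ℝ × ℝ) (x : X) (C : Set X) (ε : ℝ) (p : ℝ × ℝ) : Prop :=
  ∃ y ∈ C, φ y = p ∧ dist (φ x) p = ε ∧
    ∀ z ∈ H.arc x y, z ≠ y → dist (φ x) (φ z) < ε

/-- The local arms at `x` represented by the arms `C, C', C''` are in
counterclockwise cyclic order under the embedding `φ`. -/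
def ArmsCcw (φ : X → ℝ × ℝ) (x : X) (C C' C'' : Set X) : Prop :=
  ∃ ε₀ : ℝ, 0 < ε₀ ∧ ∀ ε : ℝ, 0 < ε → ε < ε₀ →
    ∀ p p' p'' : ℝ × ℝ, H.ExitPt φ x C ε p → H.ExitPt φ x C' ε p' →
      H.ExitPt φ x C'' ε p'' → Ccw p p' p''

/-- `f` respects the cyclic order (induced by the embedding `φ`) of the local arms
at all branch points. -/
def RespectsCyclicOrder (φ : X → ℝ × ℝ) : Prop :=
  ∀ x : X, IsBranchPt x →
    ∀ C C' C'' : Set X, C ∈ arms x → C' ∈ arms x → C'' ∈ arms x →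
      C ≠ C' → C' ≠ C'' → C ≠ C'' → H.ArmsCcw φ x C C' C'' →
      ∀ D D' D'' : Set X, MapsLocalArm H.f x C D → MapsLocalArm H.f x C' D' →
        MapsLocalArm H.f x C'' D'' → H.ArmsCcw φ (H.f x) D D' D''

/-- The Hubbard tree can be topologically embedded into the plane `ℝ²` so that `f`
respects the cyclic order of the local arms at all branch points. -/
def PlanarEmbeddable : Prop :=
  ∃ φ : X → ℝ × ℝ, Topology.IsEmbedding φ ∧ H.RespectsCyclicOrder φ

end HubbardTree

/-! An arc on which `fⁿ` meets `c₀` at most at the endpoints is mapped by `fⁿ` homeomorphically onto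
an arc, and the first time an arc `[x, c₁]` hits `c₀` is the first time the itineraries of `x` and
`c₁` differ. For the points of the critical orbit this time is given by `ρ`.

Let `z` be a characteristic branch point of exact period `m`. Following the arm at `f^r(z)` towards
`c₁` from one hitting of `c₀` to the next runs through the `ρ`-orbit of `r`, so this arm returns to
`z` pointing to `c₁` if `m ∈ orb_ρ(r)`, and to `c₀` otherwise. For `r = 1`, tameness means that the
arm towards `c₀` is not fixed, i.e. that `m` is in the internal address; for `r ≡ ρ(m)` modulo `m`
it tells whether the cycle of the arm towards `c₁` has length `(ρ(m) - r)/m + 1` or one more.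

For the converse, `m` being in the internal address yields a point `ζ ∈ [c₀, c₁]` with `f^m(ζ) = c₁`
such that `f^m` is injective on `[ζ, c₁]`. The branch point is the centre `x` of the tripod spanned
by `ζ`, `c₁` and `c_{m+1} = f^m(c₁)`. It is fixed by `f^m`: for `ρ(m) > 2m`, an `x` that moves under
`f^m` or `f^{2m}` contradicts expansivity; for `ρ(m) = m + r` with `m ∉ orb_ρ(r)`, the orbit of `r`
yields a smaller tripod on which `f^m` is injective and whose image has the same centre. -/

open Set

/-! ### Arcs and medians -/

section ArcSystem

variable {X : Type*} [TopologicalSpace X] {arc : X → X → Set X}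

theorem IsArcBetween.symm {A : Set X} {x y : X} (hA : IsArcBetween A x y) :
    IsArcBetween A y x := by
  rcases hA with ⟨rfl, hA⟩ | ⟨hxy, γ, hγ, hrange⟩
  · exact Or.inl ⟨rfl, hA⟩
  · exact Or.inr ⟨hxy.symm, γ.symm, hγ.comp unitInterval.symmHomeomorph.isEmbedding,
      γ.symm_range.trans hrange⟩

theorem isArcBetween_image_Icc [T2Space X] {φ : ℝ → X} {a b : ℝ} (hab : a ≤ b)
    (hφ : Continuous φ) (hinj : InjOn φ (Icc a b)) :
    IsArcBetween (φ '' Icc a b) (φ a) (φ b) := by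
  rcases hab.eq_or_lt with rfl | hlt
  · simp [IsArcBetween]
  · have hrange : range (Path.segment a b) = Icc a b := by
      rw [Path.range_segment, segment_eq_Icc hab]
    refine Or.inr ⟨hinj.ne (left_mem_Icc.2 hab) (right_mem_Icc.2 hab) hlt.ne,
      (Path.segment a b).map hφ, (Continuous.isClosedEmbedding (map_continuous _) ?_).isEmbedding,
      ?_⟩
    · intro s t hst
      have hseg : Path.segment a b s = Path.segment a b t :=
        hinj (hrange ▸ mem_range_self s) (hrange ▸ mem_range_self t) hst
      exact Subtype.ext (AffineMap.lineMap_injective ℝ hlt.ne hseg)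
    · rw [Path.map_coe, range_comp, hrange]

/-- `arc x y` is the only arc joining `x` and `y`, for all points `x`, `y` of the Hausdorff
space `X`: the topological trees without any finiteness condition. Membership `w ∈ arc x y`
serves as the betweenness relation of the tree. -/
structure IsArcSystem (arc : X → X → Set X) : Prop where
  t2Space : T2Space X
  isArcBetween : ∀ x y, IsArcBetween (arc x y) x y
  eq_arc : ∀ {x y : X} {A : Set X}, IsArcBetween A x y → A = arc x y

/-- `p` is the median of `a`, `b`, `c`: the common point of the three arcs joining them. -/
def IsMedian (arc : X → X → Set X) (a b c p : X) : Prop :=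
  p ∈ arc a b ∧ p ∈ arc b c ∧ p ∈ arc a c

namespace IsArcSystem

theorem image_Icc (hT : IsArcSystem arc) {φ : ℝ → X} {a b : ℝ} (hab : a ≤ b) (hφ : Continuous φ)
    (hinj : InjOn φ (Icc a b)) : φ '' Icc a b = arc (φ a) (φ b) :=
  have := hT.t2Space
  hT.eq_arc (isArcBetween_image_Icc hab hφ hinj)

theorem exists_parametrization (hT : IsArcSystem arc) (a : ℝ) (x y : X) :
    ∃ (φ : ℝ → X) (b : ℝ), a ≤ b ∧ Continuous φ ∧ InjOn φ (Icc a b) ∧ φ a = x ∧ φ b = y := by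
  rcases hT.isArcBetween x y with ⟨rfl, -⟩ | ⟨-, γ, hγ, -⟩
  · exact ⟨fun _ => x, a, le_rfl, continuous_const, by simp, rfl, rfl⟩
  · have hextend : InjOn γ.extend (Icc 0 1) := fun s hs t ht hst => by
      rw [Path.extend_apply _ hs, Path.extend_apply _ ht] at hst
      exact congrArg Subtype.val (hγ.injective hst)
    refine ⟨fun t => γ.extend (t - a), a + 1, by linarith, by fun_prop, fun s hs t ht hst => ?_,
      by simp, by simp⟩
    simpa using hextend ⟨by linarith [hs.1], by linarith [hs.2]⟩
      ⟨by linarith [ht.1], by linarith [ht.2]⟩ hst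

theorem left_mem (hT : IsArcSystem arc) (x y : X) : x ∈ arc x y := by
  obtain ⟨φ, b, hb, hφ, hinj, rfl, rfl⟩ := hT.exists_parametrization 0 x y
  exact hT.image_Icc hb hφ hinj ▸ mem_image_of_mem φ (left_mem_Icc.2 hb)

theorem arc_comm (hT : IsArcSystem arc) (x y : X) : arc x y = arc y x :=
  hT.eq_arc (hT.isArcBetween x y).symm

theorem right_mem (hT : IsArcSystem arc) (x y : X) : y ∈ arc x y :=
  hT.arc_comm x y ▸ hT.left_mem y x

theorem arc_self (hT : IsArcSystem arc) (x : X) : arc x x = {x} :=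
  (hT.eq_arc (Or.inl ⟨rfl, rfl⟩)).symm

theorem mem_symm (hT : IsArcSystem arc) {x y w : X} (hw : w ∈ arc x y) : w ∈ arc y x :=
  hT.arc_comm x y ▸ hw

theorem exists_parametrization_through (hT : IsArcSystem arc) {x y w : X} (hw : w ∈ arc x y) :
    ∃ (φ : ℝ → X) (s b : ℝ), 0 ≤ s ∧ s ≤ b ∧ Continuous φ ∧ InjOn φ (Icc 0 b) ∧ φ 0 = x ∧
      φ s = w ∧ φ b = y ∧ φ '' Icc 0 s = arc x w ∧ φ '' Icc s b = arc w y := by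
  obtain ⟨φ, b, hb, hφ, hinj, rfl, rfl⟩ := hT.exists_parametrization 0 x y
  rw [← hT.image_Icc hb hφ hinj] at hw
  obtain ⟨s, hs, rfl⟩ := hw
  exact ⟨φ, s, b, hs.1, hs.2, hφ, hinj, rfl, rfl, rfl,
    hT.image_Icc hs.1 hφ (hinj.mono (Icc_subset_Icc_right hs.2)),
    hT.image_Icc hs.2 hφ (hinj.mono (Icc_subset_Icc_left hs.1))⟩

theorem arc_eq_union (hT : IsArcSystem arc) {x y w : X} (hw : w ∈ arc x y) :
    arc x y = arc x w ∪ arc w y := by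
  obtain ⟨φ, s, b, hs, hsb, hφ, hinj, rfl, rfl, rfl, hleft, hright⟩ :=
    hT.exists_parametrization_through hw
  rw [← hleft, ← hright, ← image_union, Icc_union_Icc_eq_Icc hs hsb,
    hT.image_Icc (hs.trans hsb) hφ hinj]

theorem eq_of_mem_arc_of_mem_arc (hT : IsArcSystem arc) {x y w v : X} (hw : w ∈ arc x y)
    (hxw : v ∈ arc x w) (hwy : v ∈ arc w y) : v = w := by
  obtain ⟨φ, s, b, hs, hsb, -, hinj, rfl, rfl, rfl, hleft, hright⟩ :=
    hT.exists_parametrization_through hw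
  rw [← hleft] at hxw
  rw [← hright] at hwy
  obtain ⟨t, ht, rfl⟩ := hxw
  obtain ⟨u, hu, hut⟩ := hwy
  have htu : u = t := hinj ⟨hs.trans hu.1, hu.2⟩ ⟨ht.1, ht.2.trans hsb⟩ hut
  rw [le_antisymm ht.2 (htu ▸ hu.1)]

theorem mem_antisymm (hT : IsArcSystem arc) {x y w : X} (hw : w ∈ arc x y) (hx : x ∈ arc w y) :
    w = x :=
  (hT.eq_of_mem_arc_of_mem_arc hw (hT.left_mem x w) hx).symm

theorem arc_subset_left (hT : IsArcSystem arc) {x y w : X} (hw : w ∈ arc x y) : arc x w ⊆ arc x y :=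
  hT.arc_eq_union hw ▸ subset_union_left

theorem arc_subset_right (hT : IsArcSystem arc) {x y w : X} (hw : w ∈ arc x y) :
    arc w y ⊆ arc x y :=
  hT.arc_eq_union hw ▸ subset_union_right

theorem arc_subset (hT : IsArcSystem arc) {x y u v : X} (hu : u ∈ arc x y) (hv : v ∈ arc x y) :
    arc u v ⊆ arc x y := by
  rw [hT.arc_eq_union hu] at hv
  rcases hv with hv | hv
  · exact hT.arc_comm u v ▸ (hT.arc_subset_right hv).trans (hT.arc_subset_left hu)
  · exact (hT.arc_subset_left hv).trans (hT.arc_subset_right hu)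

theorem mem_arc_left_of_mem_arc_right (hT : IsArcSystem arc) {x y w v : X} (hw : w ∈ arc x y)
    (hv : v ∈ arc w y) : w ∈ arc x v := by
  rcases (hT.arc_eq_union (hT.arc_subset_right hw hv) ▸ hw : w ∈ arc x v ∪ arc v y) with h | h
  · exact h
  · exact hT.mem_antisymm hv h ▸ hT.right_mem x v

theorem mem_arc_or_mem_arc_of_mem (hT : IsArcSystem arc) {x y u v : X} (hu : u ∈ arc x y)
    (hv : v ∈ arc x y) : u ∈ arc x v ∨ v ∈ arc x u := by
  rcases (hT.arc_eq_union hv ▸ hu : u ∈ arc x v ∪ arc v y) with h | h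
  · exact Or.inl h
  · exact Or.inr (hT.mem_arc_left_of_mem_arc_right hv h)

theorem isCompact_arc (hT : IsArcSystem arc) (x y : X) : IsCompact (arc x y) := by
  obtain ⟨φ, b, hb, hφ, hinj, rfl, rfl⟩ := hT.exists_parametrization 0 x y
  exact hT.image_Icc hb hφ hinj ▸ isCompact_Icc.image hφ

theorem isClosed_arc (hT : IsArcSystem arc) (x y : X) : IsClosed (arc x y) :=
  have := hT.t2Space
  (hT.isCompact_arc x y).isClosed

theorem isPreconnected_arc (hT : IsArcSystem arc) (x y : X) : IsPreconnected (arc x y) := by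
  obtain ⟨φ, b, hb, hφ, hinj, rfl, rfl⟩ := hT.exists_parametrization 0 x y
  exact hT.image_Icc hb hφ hinj ▸ isPreconnected_Icc.image φ hφ.continuousOn

theorem isPreconnected_arc_diff_left (hT : IsArcSystem arc) (x y : X) :
    IsPreconnected (arc x y \ {x}) := by
  obtain ⟨φ, b, hb, hφ, hinj, rfl, rfl⟩ := hT.exists_parametrization 0 x y
  have himage : φ '' Ioc 0 b = arc (φ 0) (φ b) \ {φ 0} := by
    rw [← hT.image_Icc hb hφ hinj, ← image_singleton, ← Icc_sdiff_left]
    exact hinj.image_sdiff_subset (singleton_subset_iff.2 (left_mem_Icc.2 hb))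
  exact himage ▸ isPreconnected_Ioc.image φ hφ.continuousOn

theorem arc_eq_union_of_inter (hT : IsArcSystem arc) {x u v : X}
    (h : ∀ w ∈ arc x u, w ∈ arc u v → w = u) : arc x v = arc x u ∪ arc u v := by
  obtain ⟨φ, b, hb, hφ, hφinj, rfl, rfl⟩ := hT.exists_parametrization 0 x u
  obtain ⟨ψ, d, hd, hψ, hψinj, hglue, rfl⟩ := hT.exists_parametrization b (φ b) v
  have hφimage := hT.image_Icc hb hφ hφinj
  have hψimage := hT.image_Icc hd hψ hψinj
  rw [hglue] at hψimage
  rw [← hφimage, ← hψimage] at h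
  let χ : ℝ → X := fun t => if t ≤ b then φ t else ψ t
  have hχ : Continuous χ :=
    hφ.if_le hψ continuous_id continuous_const (by rintro t rfl; exact hglue.symm)
  have hχφ : EqOn χ φ (Icc 0 b) := fun t ht => if_pos ht.2
  have hχψ : EqOn χ ψ (Icc b d) := fun t ht => by
    rcases ht.1.eq_or_lt with rfl | hbt
    · exact (if_pos le_rfl).trans hglue.symm
    · exact if_neg hbt.not_ge
  have hne : ∀ s ∈ Icc 0 b, ∀ t ∈ Ioc b d, χ s ≠ χ t := fun s hs t ht hst => by
    rw [hχφ hs, hχψ (Ioc_subset_Icc_self ht)] at hst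
    have hs' : φ s = φ b := h _ ⟨s, hs, rfl⟩ ⟨t, Ioc_subset_Icc_self ht, hst.symm⟩
    exact ht.1.ne (hψinj (left_mem_Icc.2 hd) (Ioc_subset_Icc_self ht)
      (hglue.trans (hs'.symm.trans hst)))
  have hχinj : InjOn χ (Icc 0 d) := by
    have hdisj : Disjoint (Icc 0 b) (Ioc b d) :=
      disjoint_left.2 fun t htb htd => htb.2.not_gt htd.1
    rw [← Icc_union_Ioc_eq_Icc hb hd]
    exact (injOn_union hdisj).2
      ⟨hφinj.congr hχφ.symm, (hψinj.congr hχψ.symm).mono Ioc_subset_Icc_self, hne⟩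
  rw [← hφimage, ← hψimage, ← hχφ.image_eq, ← hχψ.image_eq, ← image_union,
    Icc_union_Icc_eq_Icc hb hd, hT.image_Icc (hb.trans hd) hχ hχinj, hχφ (left_mem_Icc.2 hb),
    hχψ (right_mem_Icc.2 hd)]

theorem exists_first_mem (hT : IsArcSystem arc) {x y : X} {S : Set X} (hS : IsClosed S)
    (hne : (arc x y ∩ S).Nonempty) : ∃ p ∈ arc x y, p ∈ S ∧ ∀ w ∈ arc x p, w ∈ S → w = p := by
  obtain ⟨φ, b, hb, hφ, hinj, rfl, rfl⟩ := hT.exists_parametrization 0 x y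
  rw [← hT.image_Icc hb hφ hinj] at hne ⊢
  have hcompact : IsCompact (Icc 0 b ∩ φ ⁻¹' S) :=
    isCompact_Icc.inter_right (hS.preimage hφ)
  obtain ⟨_, ⟨t, ht, rfl⟩, htS⟩ := hne
  obtain ⟨s, ⟨hs, hsS⟩, hmin⟩ := hcompact.exists_isLeast ⟨t, ht, htS⟩
  refine ⟨φ s, ⟨s, hs, rfl⟩, hsS, ?_⟩
  rw [← hT.image_Icc hs.1 hφ (hinj.mono (Icc_subset_Icc_right hs.2))]
  rintro _ ⟨u, hu, rfl⟩ huS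
  rw [le_antisymm hu.2 (hmin ⟨⟨hu.1, hu.2.trans hs.2⟩, huS⟩)]

theorem exists_median (hT : IsArcSystem arc) (x y v : X) : ∃ p, IsMedian arc x y v p := by
  obtain ⟨p, hxy, hyv, hfirst⟩ := hT.exists_first_mem (hT.isClosed_arc y v)
    ⟨y, hT.right_mem x y, hT.left_mem y v⟩
  have hxv : arc x v = arc x p ∪ arc p v :=
    hT.arc_eq_union_of_inter fun w hw hwv => hfirst w hw (hT.arc_subset_right hyv hwv)
  exact ⟨p, hxy, hyv, hxv ▸ Or.inl (hT.right_mem x p)⟩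

theorem mem_arc_or_mem_arc (hT : IsArcSystem arc) {x v w : X} (y : X) (hw : w ∈ arc x v) :
    w ∈ arc x y ∨ w ∈ arc y v := by
  obtain ⟨p, hxy, hyv, hxv⟩ := hT.exists_median x y v
  exact (hT.arc_eq_union hxv ▸ hw).imp (hT.arc_subset_left hxy ·) (hT.arc_subset_right hyv ·)

theorem mem_arc_trans (hT : IsArcSystem arc) {x y u v : X} (hu : u ∈ arc x v) (hv : v ∈ arc u y)
    (hne : v ≠ u) : v ∈ arc x y :=
  (hT.mem_arc_or_mem_arc x hv).resolve_left fun h => hne (hT.mem_antisymm h (hT.mem_symm hu))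

theorem exists_ne_mem_arc_mem_arc (hT : IsArcSystem arc) {p x y : X} (hp : p ∉ arc x y) :
    ∃ u, u ≠ p ∧ u ∈ arc p x ∧ u ∈ arc p y := by
  obtain ⟨u, hpx, hxy, hpy⟩ := hT.exists_median p x y
  exact ⟨u, by rintro rfl; exact hp hxy, hpx, hpy⟩

theorem exists_mem_arc_arc_subset (hT : IsArcSystem arc) {x y : X} (hxy : x ≠ y) {U : Set X}
    (hU : U ∈ nhds x) : ∃ p ∈ arc x y, p ≠ x ∧ arc x p ⊆ U := by
  obtain ⟨φ, b, hb, hφ, hinj, rfl, rfl⟩ := hT.exists_parametrization 0 x y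
  have hb0 : 0 < b := hb.lt_of_ne (fun h => hxy (congrArg φ h))
  obtain ⟨s, hs, hsU⟩ : ∃ s ∈ Ioc 0 b, Icc 0 s ⊆ φ ⁻¹' U := by
    obtain ⟨c, hc, hcU⟩ := exists_Ico_subset_of_mem_nhds (hφ.continuousAt hU) ⟨b, hb0⟩
    exact ⟨min (c / 2) b, ⟨lt_min (by linarith) hb0, min_le_right _ _⟩,
      (Icc_subset_Ico_right ((min_le_left _ _).trans_lt (by linarith))).trans hcU⟩
  refine ⟨φ s, ?_, hinj.ne (Ioc_subset_Icc_self hs) (left_mem_Icc.2 hb) hs.1.ne', ?_⟩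
  · exact hT.image_Icc hb hφ hinj ▸ mem_image_of_mem φ (Ioc_subset_Icc_self hs)
  · rw [← hT.image_Icc hs.1.le hφ (hinj.mono (Icc_subset_Icc_right hs.2))]
    exact image_subset_iff.2 hsU

end IsArcSystem

end ArcSystem

/-! ### Local arms -/

section Arms

variable {X : Type*} [TopologicalSpace X] {arc : X → X → Set X}

theorem self_mem_armTo {x y : X} (hy : y ≠ x) : y ∈ armTo x y := mem_connectedComponentIn hy

theorem notMem_armTo (x y : X) : x ∉ armTo x y := fun h => connectedComponentIn_subset _ _ h rfl

theorem armTo_mem_arms {x y : X} (hy : y ≠ x) : armTo x y ∈ arms x := ⟨y, hy, rfl⟩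

theorem armTo_eq_of_mem {x y w : X} (hw : w ∈ armTo x y) : armTo x y = armTo x w :=
  connectedComponentIn_eq hw

theorem exists_armTo_eq {x : X} {C : Set X} (hC : C ∈ arms x) : ∃ y, y ≠ x ∧ C = armTo x y := hC

theorem eq_armTo_of_mem {x w : X} {C : Set X} (hC : C ∈ arms x) (hw : w ∈ C) : C = armTo x w := by
  obtain ⟨y, -, rfl⟩ := hC
  exact connectedComponentIn_eq hw

theorem ne_of_mem_arm {x w : X} {C : Set X} (hC : C ∈ arms x) (hw : w ∈ C) : w ≠ x := by
  obtain ⟨y, -, rfl⟩ := hC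
  exact connectedComponentIn_subset _ _ hw

theorem closure_arm_subset {x : X} {C : Set X} (hC : C ∈ arms x) : closure C ⊆ insert x C := by
  obtain ⟨y, hy, rfl⟩ := hC
  intro w hw
  refine or_iff_not_imp_left.2 fun hwx => ?_
  have hconn : IsPreconnected (insert w (connectedComponentIn {x}ᶜ y)) :=
    isPreconnected_connectedComponentIn.subset_closure (subset_insert _ _)
      (insert_subset hw subset_closure)
  exact hconn.subset_connectedComponentIn (mem_insert_of_mem _ (mem_connectedComponentIn hy))
    (insert_subset hwx (connectedComponentIn_subset _ _)) (mem_insert _ _)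

theorem isOpen_arm [T1Space X] {x : X} (hfin : (arms x).Finite) {C : Set X} (hC : C ∈ arms x) :
    IsOpen C := by
  have hcompl : Cᶜ = insert x (⋃ D ∈ arms x \ {C}, closure D) := by
    ext w
    simp only [mem_compl_iff, mem_insert_iff, mem_iUnion, exists_prop]
    constructor
    · intro hwC
      refine or_iff_not_imp_left.2 fun hwx => ⟨armTo x w, ⟨armTo_mem_arms hwx, ?_⟩,
        subset_closure (self_mem_armTo hwx)⟩
      rintro rfl
      exact hwC (self_mem_armTo hwx)
    · rintro (rfl | ⟨D, ⟨hD, hDC⟩, hwD⟩) hwC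
      · exact ne_of_mem_arm hC hwC rfl
      · rcases closure_arm_subset hD hwD with rfl | hwD
        · exact ne_of_mem_arm hC hwC rfl
        · exact hDC ((eq_armTo_of_mem hD hwD).trans (eq_armTo_of_mem hC hwC).symm)
  rw [← isClosed_compl_iff, hcompl, insert_eq]
  exact isClosed_singleton.union
    ((hfin.subset sdiff_subset).isClosed_biUnion fun _ _ => isClosed_closure)

theorem IsBranchPt.exists_three_arms {x : X} (hx : IsBranchPt x) : ∃ a b c, a ≠ x ∧ b ≠ x ∧ c ≠ x ∧
    armTo x a ≠ armTo x b ∧ armTo x a ≠ armTo x c ∧ armTo x b ≠ armTo x c := by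
  have hcard : 2 < (arms x).ncard := hx
  obtain ⟨_, _, _, ⟨a, ha, rfl⟩, ⟨b, hb, rfl⟩, ⟨c, hc, rfl⟩, hab, hac, hbc⟩ :=
    (two_lt_ncard_iff (finite_of_ncard_pos (by lia))).1 hcard
  exact ⟨a, b, c, ha, hb, hc, hab, hac, hbc⟩

theorem MapsLocalArm.comp {g h : X → X} {x : X} {C D E : Set X} (hg : Continuous g)
    (hCD : MapsLocalArm g x C D) (hDE : MapsLocalArm h (g x) D E) : MapsLocalArm (h ∘ g) x C E := by
  obtain ⟨hC, -, U, hU, hUD⟩ := hCD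
  obtain ⟨-, hE, V, hV, hVE⟩ := hDE
  refine ⟨hC, hE, U ∩ g ⁻¹' V, Filter.inter_mem hU (hg.continuousAt hV), ?_⟩
  rintro _ ⟨w, ⟨hwC, hwU, hwV⟩, rfl⟩
  exact hVE ⟨g w, ⟨hUD ⟨w, ⟨hwC, hwU⟩, rfl⟩, hwV⟩, rfl⟩

namespace IsArcSystem

theorem mem_arc_mono (hT : IsArcSystem arc) {x a b a' b' : X} (hx : x ∈ arc a b) (ha : a' ∈ arc x a)
    (hb : b' ∈ arc x b) : x ∈ arc a' b' :=
  hT.mem_symm (hT.mem_arc_left_of_mem_arc_right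
    (hT.mem_symm (hT.mem_arc_left_of_mem_arc_right hx hb)) ha)

theorem isMedian_unique (hT : IsArcSystem arc) {a b c x y : X} (hx : IsMedian arc a b c x)
    (hy : IsMedian arc a b c y) : x = y := by
  have key : ∀ {x y : X}, IsMedian arc a b c x → IsMedian arc a b c y → y ∈ arc a x → y = x := by
    rintro x y ⟨hxab, hxbc, hxac⟩ ⟨-, hybc, -⟩ hyax
    rcases (hT.arc_eq_union hxbc ▸ hybc : y ∈ arc b x ∪ arc x c) with h | h
    · exact hT.eq_of_mem_arc_of_mem_arc hxab hyax (hT.mem_symm h)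
    · exact hT.eq_of_mem_arc_of_mem_arc hxac hyax h
  rcases hT.mem_arc_or_mem_arc_of_mem hx.1 hy.1 with h | h
  · exact (key hy hx h)
  · exact (key hx hy h).symm

theorem mem_arc_of_mem_arc_of_notMem_arc (hT : IsArcSystem arc) {a b u v w : X} (hu : u ∈ arc a w)
    (hua : u ∉ arc a v) (hb : b ∈ arc u v) : b ∈ arc v w :=
  hT.arc_subset_left ((hT.mem_arc_or_mem_arc v hu).resolve_left hua) (hT.mem_symm hb)

theorem mem_arc_of_isMedian_of_isMedian (hT : IsArcSystem arc) {ζ a c c' x y : X}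
    (hx : IsMedian arc ζ a c x) (hy : IsMedian arc a c c' y) (hyx : y ∈ arc a x) (hne : y ≠ x) :
    y ∈ arc ζ c' := by
  have hxc : x ∈ arc y c := hT.mem_symm (hT.mem_arc_left_of_mem_arc_right (hT.mem_symm hx.2.1)
    (hT.mem_symm hyx))
  have hxc' : y ∈ arc x c' := hT.mem_arc_mono hy.2.1 hxc (hT.right_mem _ _)
  exact (hT.mem_arc_or_mem_arc ζ hxc').resolve_left fun hmem =>
    hne (hT.eq_of_mem_arc_of_mem_arc hx.1 (hT.mem_symm hmem) (hT.mem_symm hyx))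

theorem mem_armTo_of_notMem_arc (hT : IsArcSystem arc) {x y w : X} (h : x ∉ arc y w) :
    w ∈ armTo x y :=
  (hT.isPreconnected_arc y w).subset_connectedComponentIn (hT.left_mem y w)
    (subset_compl_singleton_iff.2 h) (hT.right_mem y w)

theorem arc_diff_subset_armTo (hT : IsArcSystem arc) {x y : X} (hy : y ≠ x) :
    arc x y \ {x} ⊆ armTo x y :=
  (hT.isPreconnected_arc_diff_left x y).subset_connectedComponentIn ⟨hT.right_mem x y, hy⟩
    fun _ hw => hw.2

theorem ne_of_mem_arc (hT : IsArcSystem arc) {x y w : X} (hw : w ∈ arc x y) (hwx : w ≠ x) :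
    y ≠ x := by
  rintro rfl
  exact hwx (by simpa only [hT.arc_self, mem_singleton_iff] using hw)

theorem armTo_eq_of_mem_arc (hT : IsArcSystem arc) {x a w : X} (hw : w ∈ arc x a) (hwx : w ≠ x) :
    armTo x w = armTo x a :=
  (armTo_eq_of_mem (hT.arc_diff_subset_armTo (hT.ne_of_mem_arc hw hwx) ⟨hw, hwx⟩)).symm

theorem mapsLocalArm_unique (hT : IsArcSystem arc) {g : X → X} {x : X} {C D D' : Set X}
    (hD : MapsLocalArm g x C D) (hD' : MapsLocalArm g x C D') : D = D' := by
  obtain ⟨hC, hDarm, U, hU, hUD⟩ := hD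
  obtain ⟨-, hD'arm, U', hU', hUD'⟩ := hD'
  obtain ⟨y, hyx, rfl⟩ := exists_armTo_eq hC
  obtain ⟨p, hp, hpx, hpU⟩ := hT.exists_mem_arc_arc_subset hyx.symm (Filter.inter_mem hU hU')
  have hpC : p ∈ armTo x y := hT.arc_diff_subset_armTo hyx ⟨hp, hpx⟩
  obtain ⟨hpU, hpU'⟩ := hpU (hT.right_mem x p)
  rw [eq_armTo_of_mem hDarm (hUD ⟨p, ⟨hpC, hpU⟩, rfl⟩),
    eq_armTo_of_mem hD'arm (hUD' ⟨p, ⟨hpC, hpU'⟩, rfl⟩)]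

end IsArcSystem

/-- The finite topological trees: a compact space with unique arcs, finitely many endpoints and
finitely many arms at each point. -/
structure IsFiniteTree (arc : X → X → Set X) : Prop extends IsArcSystem arc where
  compactSpace : CompactSpace X
  finite_arms : ∀ x : X, (arms x).Finite
  finite_endpoints : {x : X | IsEndpoint x}.Finite

/-- The part of the tree behind `q` as seen from `o`, with `q` itself. -/
def shadow (o q : X) : Set X := (armTo q o)ᶜ

theorem self_mem_shadow (o q : X) : q ∈ shadow o q := notMem_armTo q o

theorem isEndpoint_of_shadow_subset {o q : X} (hqo : q ≠ o) (h : shadow o q ⊆ {q}) :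
    IsEndpoint q := by
  have harms : arms q = {armTo q o} := by
    refine subset_antisymm (fun C hC => ?_) (singleton_subset_iff.2 (armTo_mem_arms hqo.symm))
    obtain ⟨w, hwq, rfl⟩ := exists_armTo_eq hC
    exact (armTo_eq_of_mem (not_imp_comm.1 (@h w) hwq)).symm
  rw [IsEndpoint, harms, ncard_singleton]

theorem IsArcSystem.shadow_ssubset_shadow (hT : IsArcSystem arc) {o q q' : X} (hqo : q ≠ o)
    (hq' : q' ∈ shadow o q) (hne : q' ≠ q) : shadow o q' ⊂ shadow o q := by
  have hconn : IsPreconnected (armTo q o ∪ arc o q) :=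
    IsPreconnected.union o (self_mem_armTo hqo.symm) (hT.left_mem o q)
      isPreconnected_connectedComponentIn (hT.isPreconnected_arc o q)
  have hq'_notMem : q' ∉ armTo q o ∪ arc o q := fun h => hq' <| h.elim id fun h =>
    hT.arc_diff_subset_armTo hqo.symm ⟨hT.mem_symm h, hne⟩
  have hsub : armTo q o ∪ arc o q ⊆ armTo q' o :=
    hconn.subset_connectedComponentIn (Or.inr (hT.left_mem o q))
      (subset_compl_singleton_iff.2 hq'_notMem)
  exact (ssubset_iff_of_subset (compl_subset_compl.2 (subset_union_left.trans hsub))).2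
    ⟨q, self_mem_shadow o q, not_not.2 (hsub (Or.inr (hT.right_mem o q)))⟩

namespace IsFiniteTree

theorem isOpen_of_mem_arms (hT : IsFiniteTree arc) {x : X} {C : Set X} (hC : C ∈ arms x) :
    IsOpen C :=
  have := hT.t2Space
  isOpen_arm (hT.finite_arms x) hC

theorem exists_mem_iInter_shadow (hT : IsFiniteTree arc) {o : X} {c : Set (Set X)}
    (hc : ∀ S ∈ c, ∃ q, q ≠ o ∧ shadow o q = S) (hchain : IsChain (· ⊆ ·) c) (hne : c.Nonempty) :
    (⋂₀ c).Nonempty := by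
  have := hT.compactSpace
  have := hne.to_subtype
  have hclosed : ∀ S ∈ c, IsClosed S := fun S hS => by
    obtain ⟨q, hq, rfl⟩ := hc S hS
    exact (hT.isOpen_of_mem_arms (armTo_mem_arms hq.symm)).isClosed_compl
  have hdir : DirectedOn (· ⊇ ·) c := fun S hS S' hS' => (hchain.total hS hS').elim
    (fun h => ⟨S, hS, subset_rfl, h⟩) (fun h => ⟨S', hS', h, subset_rfl⟩)
  refine IsCompact.nonempty_sInter_of_directed_nonempty_isCompact_isClosed
    hdir (fun S hS => ?_) (fun S hS => (hclosed S hS).isCompact) hclosed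
  obtain ⟨q, -, rfl⟩ := hc S hS
  exact ⟨q, self_mem_shadow o q⟩

theorem exists_shadow_subset_singleton (hT : IsFiniteTree arc) {o p : X} (hpo : p ≠ o) :
    ∃ e ∈ shadow o p, e ≠ o ∧ shadow o e ⊆ {e} := by
  have hsub : ∀ {q q'}, q ≠ o → q' ∈ shadow o q → q' ≠ o ∧ shadow o q' ⊆ shadow o q :=
    fun {q q'} hq hq' => by
      refine ⟨by rintro rfl; exact hq' (self_mem_armTo hq.symm), ?_⟩
      rcases eq_or_ne q' q with rfl | hne
      · exact subset_rfl
      · exact (hT.shadow_ssubset_shadow hq hq' hne).subset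
  obtain ⟨M, hMp, hMin⟩ := zorn_superset_nonempty {S | ∃ q, q ≠ o ∧ shadow o q = S}
    (fun c hc hchain hne => by
      obtain ⟨q, hq⟩ := hT.exists_mem_iInter_shadow (fun S hS => hc hS) hchain hne
      have hq' : ∀ S ∈ c, q ≠ o ∧ shadow o q ⊆ S := fun S hS => by
        obtain ⟨q', hq'o, rfl⟩ := hc hS
        exact hsub hq'o (hq _ hS)
      exact ⟨_, ⟨q, (hq' _ hne.some_mem).1, rfl⟩, fun S hS => (hq' S hS).2⟩)
    _ ⟨p, hpo, rfl⟩
  obtain ⟨e, heo, rfl⟩ := hMin.prop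
  refine ⟨e, hMp (self_mem_shadow o e), heo, fun w hw => ?_⟩
  by_contra hwe
  exact hMin.not_prop_of_ssubset (hT.shadow_ssubset_shadow heo hw hwe) ⟨w, (hsub heo hw).1, rfl⟩

theorem exists_isEndpoint_mem_arc (hT : IsFiniteTree arc) {o p : X} (hpo : p ≠ o) :
    ∃ e, IsEndpoint e ∧ e ≠ o ∧ p ∈ arc o e := by
  obtain ⟨e, he, heo, hmin⟩ := hT.exists_shadow_subset_singleton hpo
  exact ⟨e, isEndpoint_of_shadow_subset heo hmin, heo,
    not_imp_comm.1 hT.mem_armTo_of_notMem_arc he⟩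

theorem isClosed_insert_of_forall_notMem_arc (hT : IsFiniteTree arc) {x : X} {P : Set X}
    (hP : ∀ v ∈ P, ∀ w, x ∉ arc v w → w ∈ P) : IsClosed (insert x P) := by
  have hcover : insert x P = insert x (⋃ e ∈ {e : X | IsEndpoint e ∧ e ∈ P}, arc x e) := by
    ext v
    rcases eq_or_ne v x with rfl | hvx
    · simp
    simp only [mem_insert_iff, hvx, false_or, mem_iUnion, mem_ofPred_eq, exists_prop]
    constructor
    · intro hv
      obtain ⟨e, he, -, hve⟩ := hT.exists_isEndpoint_mem_arc hvx
      exact ⟨e, ⟨he, hP v hv e fun h => hvx (hT.mem_antisymm hve h)⟩, hve⟩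
    · rintro ⟨e, ⟨-, heP⟩, hve⟩
      exact hP e heP v fun h => hvx (hT.mem_antisymm hve (hT.mem_symm h))
  have := hT.t2Space
  rw [hcover, insert_eq]
  exact isClosed_singleton.union ((hT.finite_endpoints.subset fun _ he => he.1).isClosed_biUnion
    fun e _ => hT.isClosed_arc x e)

theorem mem_armTo_iff (hT : IsFiniteTree arc) {x y w : X} (hy : y ≠ x) :
    w ∈ armTo x y ↔ x ∉ arc y w := by
  refine ⟨fun hw hxw => ?_, hT.mem_armTo_of_notMem_arc⟩
  have hnear : IsClosed (insert x {v | x ∉ arc y v}) :=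
    hT.isClosed_insert_of_forall_notMem_arc fun v hv w hvw hw =>
      (hT.mem_arc_or_mem_arc v hw).elim hv hvw
  have hfar : IsClosed (insert x {v | v ≠ x ∧ x ∈ arc y v}) := by
    refine hT.isClosed_insert_of_forall_notMem_arc fun v hv w hvw => ⟨?_, ?_⟩
    · rintro rfl; exact hvw (hT.right_mem _ _)
    · exact (hT.mem_arc_or_mem_arc w hv.2).resolve_right fun h => hvw (hT.mem_symm h)
  obtain ⟨v, hv, hvnear, hvfar⟩ := isPreconnected_closed_iff.1
    (isPreconnected_connectedComponentIn (x := y) (F := {x}ᶜ)) _ _ hnear hfar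
    (fun v hv => by
      have hvx : v ≠ x := connectedComponentIn_subset _ _ hv
      by_cases h : x ∈ arc y v <;> simp [hvx, h])
    ⟨y, self_mem_armTo hy, Or.inr (by simpa [hT.arc_self] using hy.symm)⟩
    ⟨w, hw, Or.inr ⟨connectedComponentIn_subset _ _ hw, hxw⟩⟩
  have hvx : v ≠ x := connectedComponentIn_subset _ _ hv
  exact hvnear.resolve_left hvx (hvfar.resolve_left hvx).2

theorem armTo_eq_iff (hT : IsFiniteTree arc) {x y w : X} (hy : y ≠ x) (hw : w ≠ x) :
    armTo x y = armTo x w ↔ x ∉ arc y w := by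
  rw [← hT.mem_armTo_iff hy]
  exact ⟨fun h => h ▸ self_mem_armTo hw, armTo_eq_of_mem⟩

theorem armTo_ne_iff (hT : IsFiniteTree arc) {x y w : X} (hy : y ≠ x) (hw : w ≠ x) :
    armTo x y ≠ armTo x w ↔ x ∈ arc y w :=
  (hT.armTo_eq_iff hy hw).not_left

theorem isClosed_setOf_mem_arc (hT : IsFiniteTree arc) (x w : X) : IsClosed {v | w ∈ arc x v} := by
  rcases eq_or_ne x w with rfl | hxw
  · simp [hT.left_mem]
  · have hcompl : {v | w ∈ arc x v} = (armTo w x)ᶜ := by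
      ext v
      simp [hT.mem_armTo_iff hxw]
    exact hcompl ▸ (hT.isOpen_of_mem_arms (armTo_mem_arms hxw)).isClosed_compl

theorem isBranchPt_of_isMedian (hT : IsFiniteTree arc) {x a b c : X} (ha : a ≠ x) (hb : b ≠ x)
    (hc : c ≠ x) (hx : IsMedian arc a b c x) : IsBranchPt x := by
  obtain ⟨hab, hbc, hac⟩ := hx
  have hcard : ({armTo x a, armTo x b, armTo x c} : Set (Set X)).ncard = 3 :=
    ncard_eq_three.2 ⟨_, _, _, (hT.armTo_ne_iff ha hb).2 hab, (hT.armTo_ne_iff ha hc).2 hac,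
      (hT.armTo_ne_iff hb hc).2 hbc, rfl⟩
  rw [IsBranchPt, ← hcard]
  refine ncard_le_ncard ?_ (hT.finite_arms x)
  rintro C (rfl | rfl | rfl)
  exacts [armTo_mem_arms ha, armTo_mem_arms hb, armTo_mem_arms hc]

theorem eq_or_eq_of_isEndpoint_mem_arc (hT : IsFiniteTree arc) {e x y : X} (he : IsEndpoint e)
    (hmem : e ∈ arc x y) : e = x ∨ e = y := by
  by_contra! hne
  obtain ⟨C, hC⟩ := ncard_eq_one.1 he
  have hx : armTo e x ∈ ({C} : Set (Set X)) := hC ▸ armTo_mem_arms hne.1.symm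
  have hy : armTo e y ∈ ({C} : Set (Set X)) := hC ▸ armTo_mem_arms hne.2.symm
  exact (hT.armTo_ne_iff hne.1.symm hne.2.symm).2 hmem (hx.trans hy.symm)

theorem exists_isEndpoint_arm_eq (hT : IsFiniteTree arc) {x : X} {C : Set X} (hC : C ∈ arms x) :
    ∃ e, IsEndpoint e ∧ e ≠ x ∧ C = armTo x e := by
  obtain ⟨y, hyx, rfl⟩ := exists_armTo_eq hC
  obtain ⟨e, he, hex, hye⟩ := hT.exists_isEndpoint_mem_arc hyx
  exact ⟨e, he, hex, hT.armTo_eq_of_mem_arc hye hyx⟩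

theorem exists_nhds_forall_arc_subset (hT : IsFiniteTree arc) {z : X} {U : Set X}
    (hU : U ∈ nhds z) : ∃ V ∈ nhds z, ∀ w ∈ V, arc z w ⊆ U := by
  choose! p hp hpz hpU using fun e (he : e ≠ z) => hT.exists_mem_arc_arc_subset he.symm hU
  have hE : ({e | IsEndpoint e} \ {z}).Finite := hT.finite_endpoints.subset sdiff_subset
  refine ⟨⋂ e ∈ {e | IsEndpoint e} \ {z}, (arc (p e) e)ᶜ, ?_, fun w hw => ?_⟩
  · refine (Filter.biInter_mem hE).2 fun e he => (hT.isClosed_arc _ _).isOpen_compl.mem_nhds ?_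
    exact fun h => hpz e he.2 (hT.mem_antisymm (hp e he.2) h)
  · rcases eq_or_ne w z with rfl | hwz
    · rw [hT.arc_self, singleton_subset_iff]
      exact mem_of_mem_nhds hU
    obtain ⟨e, he, hez, hwe⟩ := hT.exists_isEndpoint_mem_arc hwz
    have hw' : w ∉ arc (p e) e := mem_iInter₂.1 hw e ⟨he, hez⟩
    exact (hT.arc_subset_left ((hT.mem_arc_or_mem_arc (p e) hwe).resolve_right hw')).trans
      (hpU e hez)

end IsFiniteTree

end Arms

/-! ### Arcs on which an iterate is injective -/

section LocallyInjective

variable {X : Type*} [TopologicalSpace X] {arc : X → X → Set X}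

theorem IsArcSystem.exists_gt_forall_mem_arc (hT : IsArcSystem arc) {g : ℝ → X} {a u y : ℝ}
    {U : Set ℝ} (hg : Continuous g) (hau : a ≤ u) (huy : u < y) (hU : U ∈ nhds u)
    (hinj : InjOn g U) (hmem : ∀ s ∈ Ico a u, g s ∈ arc (g a) (g u)) :
    ∃ v ∈ Ioc u y, ∀ s ∈ Ico a v, g s ∈ arc (g a) (g v) := by
  obtain ⟨l, r, ⟨hlu, hur⟩, hlr⟩ := mem_nhds_iff_exists_Ioo_subset.1 hU
  obtain ⟨v, huv, hvr⟩ := exists_between (lt_min hur huy)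
  obtain ⟨hvr, hvy⟩ := lt_min_iff.1 hvr
  have huarc : g u ∈ arc (g a) (g v) := by
    rcases hau.eq_or_lt with rfl | hau
    · exact hT.left_mem _ _
    obtain ⟨s, hs, hsu⟩ := exists_between (max_lt hlu hau)
    obtain ⟨hls, has⟩ := max_lt_iff.1 hs
    have hinj' : InjOn g (Icc s v) := hinj.mono ((Icc_subset_Ioo hls hvr).trans hlr)
    have hu : g u ∈ arc (g s) (g v) :=
      hT.image_Icc (hsu.trans huv).le hg hinj' ▸ mem_image_of_mem g ⟨hsu.le, huv.le⟩
    exact hT.mem_arc_trans (hmem s ⟨has.le, hsu⟩) hu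
      (hinj'.ne ⟨hsu.le, huv.le⟩ ⟨le_rfl, (hsu.trans huv).le⟩ hsu.ne')
  refine ⟨v, ⟨huv, hvy.le⟩, fun s hs => ?_⟩
  rcases lt_trichotomy s u with hsu | rfl | hus
  · exact hT.arc_subset_left huarc (hmem s ⟨hs.1, hsu⟩)
  · exact huarc
  · refine hT.arc_subset_right huarc ?_
    rw [← hT.image_Icc huv.le hg (hinj.mono ((Icc_subset_Ioo hlu hvr).trans hlr))]
    exact mem_image_of_mem g ⟨hus.le, hs.2.le⟩

namespace IsFiniteTree

theorem mem_arc_of_locally_injOn_Icc (hT : IsFiniteTree arc) {g : ℝ → X} {a b s : ℝ}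
    (hg : Continuous g) (hloc : ∀ t ∈ Icc a b, ∃ U ∈ nhds t, InjOn g U) (hs : s ∈ Icc a b) :
    g s ∈ arc (g a) (g b) := by
  let S : Set ℝ := {u | ∀ s ∈ Ico a u, g s ∈ arc (g a) (g u)}
  have hS : IsClosed S := by
    have hS_eq : S = ⋂ s ∈ Ici a, (Iic s ∪ g ⁻¹' {v | g s ∈ arc (g a) v}) := by
      ext u
      simp only [S, mem_ofPred_eq, mem_Ico, and_imp, mem_iInter, mem_Ici, mem_union, mem_Iic,
        mem_preimage, ← not_lt, ← imp_iff_not_or]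
    rw [hS_eq]
    exact isClosed_biInter fun s _ =>
      isClosed_Iic.union ((hT.isClosed_setOf_mem_arc _ _).preimage hg)
  have hsub : Icc a b ⊆ S := by
    have ha : a ∈ S := fun s hs => absurd hs (by simp)
    refine (hS.inter isClosed_Icc).Icc_subset_of_forall_exists_gt ha ?_
    rintro u ⟨hu, hau, hub⟩ y hy
    obtain ⟨U, hU, hinj⟩ := hloc u ⟨hau, hub.le⟩
    obtain ⟨v, huv, hv⟩ := hT.exists_gt_forall_mem_arc hg hau hy hU hinj hu
    exact ⟨v, hv, huv⟩
  rcases hs.2.eq_or_lt with rfl | hsb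
  · exact hT.right_mem _ _
  · exact hsub (right_mem_Icc.2 (hs.1.trans hs.2)) s ⟨hs.1, hsb⟩

theorem mem_arc_of_locally_injOn_Ioo (hT : IsFiniteTree arc) {g : ℝ → X} {a b s : ℝ}
    (hg : Continuous g) (hloc : ∀ t ∈ Ioo a b, ∃ U ∈ nhds t, InjOn g U) (hs : s ∈ Ioo a b) :
    g s ∈ arc (g a) (g b) := by
  have hclosed (v : X) : IsClosed (g ⁻¹' {w | g s ∈ arc v w}) :=
    (hT.isClosed_setOf_mem_arc _ _).preimage hg
  have hright : ∀ c ∈ Ioc a s, g s ∈ arc (g c) (g b) := fun c hc => by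
    have hsub : Ico s b ⊆ g ⁻¹' {w | g s ∈ arc (g c) w} := fun d hd =>
      hT.mem_arc_of_locally_injOn_Icc hg
        (fun t ht => hloc t ⟨hc.1.trans_le ht.1, ht.2.trans_lt hd.2⟩) ⟨hc.2, hd.1⟩
    exact closure_minimal hsub (hclosed _) (closure_Ico hs.2.ne ▸ right_mem_Icc.2 hs.2.le)
  have hsub : Ioc a s ⊆ g ⁻¹' {w | g s ∈ arc (g b) w} := fun c hc => hT.mem_symm (hright c hc)
  exact hT.mem_symm <|
    closure_minimal hsub (hclosed _) (closure_Ioc hs.1.ne ▸ left_mem_Icc.2 hs.1.le)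

theorem injOn_Icc_of_locally_injOn_Ioo (hT : IsFiniteTree arc) {g : ℝ → X} {a b : ℝ}
    (hg : Continuous g) (hloc : ∀ t ∈ Ioo a b, ∃ U ∈ nhds t, InjOn g U) : InjOn g (Icc a b) := by
  intro u hu v hv huv
  by_contra hne
  wlog hlt : u < v generalizing u v
  · exact this hv hu huv.symm (Ne.symm hne) (lt_of_le_of_ne (not_lt.1 hlt) (Ne.symm hne))
  have hsub : Ioo u v ⊆ Ioo a b := Ioo_subset_Ioo hu.1 hv.2
  have hconst : ∀ s ∈ Ioo u v, g s = g u := fun s hs => by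
    have hmem := hT.mem_arc_of_locally_injOn_Ioo hg (fun t ht => hloc t (hsub ht)) hs
    rwa [← huv, hT.arc_self] at hmem
  obtain ⟨t, ht⟩ := nonempty_Ioo.2 hlt
  obtain ⟨U, hU, hinj⟩ := hloc t (hsub ht)
  obtain ⟨p, hp, q, hq, hpq⟩ :=
    (infinite_of_mem_nhds t (Filter.inter_mem hU (Ioo_mem_nhds ht.1 ht.2))).nontrivial
  exact hpq (hinj hp.1 hq.1 ((hconst p hp.2).trans (hconst q hq.2).symm))

theorem injOn_arc_and_image_arc (hT : IsFiniteTree arc) {f : X → X} (hf : Continuous f) {x y : X}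
    (hloc : ∀ w ∈ arc x y, w ≠ x → w ≠ y → ∃ U ∈ nhds w, InjOn f U) :
    InjOn f (arc x y) ∧ f '' arc x y = arc (f x) (f y) := by
  obtain ⟨φ, b, hb, hφ, hinj, rfl, rfl⟩ := hT.exists_parametrization 0 x y
  have harc := hT.image_Icc hb hφ hinj
  have hcomp : InjOn (f ∘ φ) (Icc 0 b) := by
    refine hT.injOn_Icc_of_locally_injOn_Ioo (hf.comp hφ) fun t ht => ?_
    have htb := Ioo_subset_Icc_self ht
    obtain ⟨U, hU, hUinj⟩ := hloc (φ t) (harc ▸ mem_image_of_mem φ htb)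
      (hinj.ne htb (left_mem_Icc.2 hb) ht.1.ne') (hinj.ne htb (right_mem_Icc.2 hb) ht.2.ne)
    exact ⟨φ ⁻¹' U ∩ Icc 0 b, Filter.inter_mem (hφ.continuousAt hU) (Icc_mem_nhds ht.1 ht.2),
      hUinj.comp (hinj.mono inter_subset_right) fun s hs => hs.1⟩
  exact ⟨harc ▸ hcomp.image_of_comp,
    harc ▸ (image_comp f φ _).symm.trans (hT.image_Icc hb (hf.comp hφ) hcomp)⟩

end IsFiniteTree

end LocallyInjective

namespace HubbardTree

variable {X : Type*} [TopologicalSpace X] {H : HubbardTree X}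

theorem tree (H : HubbardTree X) : IsFiniteTree H.arc where
  t2Space := H.t2
  isArcBetween := H.arc_isArc
  eq_arc := H.arc_unique _ _ _
  compactSpace := H.compact
  finite_arms := H.arms_finite
  finite_endpoints := H.endpoint_finite

theorem exists_nhds_injOn (H : HubbardTree X) {x : X} (hx : x ≠ H.c0) :
    ∃ U ∈ nhds x, InjOn H.f U := by
  obtain ⟨U, hU, hxU, hemb⟩ := H.local_homeo x hx
  exact ⟨U, hU.mem_nhds hxU, injOn_iff_injective.2 hemb.injective⟩

/-- No point of the arc `[x, y]` reaches `c₀` in fewer than `n` steps. -/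
def Avoids (H : HubbardTree X) (n : ℕ) (x y : X) : Prop :=
  ∀ k < n, ∀ w ∈ H.arc x y, H.f^[k] w ≠ H.c0

/-- No interior point of the arc `[x, y]` reaches `c₀` in fewer than `n` steps; then `fⁿ` is
injective on the arc. -/
def InteriorAvoids (H : HubbardTree X) (n : ℕ) (x y : X) : Prop :=
  ∀ k < n, ∀ w ∈ H.arc x y, w ≠ x → w ≠ y → H.f^[k] w ≠ H.c0

theorem Avoids.interior {n : ℕ} {x y : X} (h : H.Avoids n x y) : H.InteriorAvoids n x y :=
  fun k hk w hw _ _ => h k hk w hw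

theorem Avoids.of_le {n k : ℕ} {x y : X} (h : H.Avoids n x y) (hk : k ≤ n) : H.Avoids k x y :=
  fun j hj => h j (hj.trans_le hk)

theorem Avoids.of_mem {n : ℕ} {x y u v : X} (h : H.Avoids n x y) (hu : u ∈ H.arc x y)
    (hv : v ∈ H.arc x y) : H.Avoids n u v :=
  fun k hk w hw => h k hk w (H.tree.arc_subset hu hv hw)

theorem Avoids.symm {n : ℕ} {x y : X} (h : H.Avoids n x y) : H.Avoids n y x :=
  fun k hk w hw => h k hk w (H.tree.mem_symm hw)

theorem Avoids.trans {n : ℕ} {x y v : X} (hxy : H.Avoids n x y) (hyv : H.Avoids n y v) :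
    H.Avoids n x v :=
  fun k hk w hw => (H.tree.mem_arc_or_mem_arc y hw).elim (hxy k hk w) (hyv k hk w)

theorem InteriorAvoids.of_le {n k : ℕ} {x y : X} (h : H.InteriorAvoids n x y) (hk : k ≤ n) :
    H.InteriorAvoids k x y :=
  fun j hj => h j (hj.trans_le hk)

theorem InteriorAvoids.symm {n : ℕ} {x y : X} (h : H.InteriorAvoids n x y) :
    H.InteriorAvoids n y x :=
  fun k hk w hw hwy hwx => h k hk w (H.tree.mem_symm hw) hwx hwy

theorem InteriorAvoids.trans {n : ℕ} {x y v : X} (hxy : H.InteriorAvoids n x y)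
    (hy : ∀ k < n, H.f^[k] y ≠ H.c0) (hyv : H.InteriorAvoids n y v) : H.InteriorAvoids n x v := by
  intro k hk w hw hwx hwv
  by_cases hwy : w = y
  · exact hwy ▸ hy k hk
  · exact (H.tree.mem_arc_or_mem_arc y hw).elim (fun hw => hxy k hk w hw hwx hwy)
      fun hw => hyv k hk w hw hwy hwv

theorem InteriorAvoids.injOn_and_image {n : ℕ} {x y : X} (h : H.InteriorAvoids n x y) :
    InjOn H.f^[n] (H.arc x y) ∧ H.f^[n] '' H.arc x y = H.arc (H.f^[n] x) (H.f^[n] y) := by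
  induction n with
  | zero => simp [InjOn]
  | succ n ih =>
    obtain ⟨hinj, himage⟩ := ih (h.of_le n.le_succ)
    obtain ⟨hinj', himage'⟩ := H.tree.injOn_arc_and_image_arc H.cont
      (x := H.f^[n] x) (y := H.f^[n] y) <| by
        rw [← himage]
        rintro _ ⟨w, hw, rfl⟩ hwx hwy
        exact H.exists_nhds_injOn
          (h n n.lt_succ_self w hw (fun e => hwx (e ▸ rfl)) fun e => hwy (e ▸ rfl))
    rw [Function.iterate_succ']
    exact ⟨hinj'.comp hinj fun w hw => himage ▸ mem_image_of_mem _ hw,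
      by rw [image_comp, himage, himage']; rfl⟩

theorem InteriorAvoids.injOn {n : ℕ} {x y : X} (h : H.InteriorAvoids n x y) :
    InjOn H.f^[n] (H.arc x y) :=
  h.injOn_and_image.1

theorem InteriorAvoids.iterate_ne {n : ℕ} {x y : X} (h : H.InteriorAvoids n x y) (hxy : x ≠ y) :
    H.f^[n] x ≠ H.f^[n] y :=
  h.injOn.ne (H.tree.left_mem x y) (H.tree.right_mem x y) hxy

theorem InteriorAvoids.image_arc {n : ℕ} {x y : X} (h : H.InteriorAvoids n x y) :
    H.f^[n] '' H.arc x y = H.arc (H.f^[n] x) (H.f^[n] y) :=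
  h.injOn_and_image.2

theorem InteriorAvoids.iterate_mem {n : ℕ} {x y w : X} (h : H.InteriorAvoids n x y)
    (hw : w ∈ H.arc x y) : H.f^[n] w ∈ H.arc (H.f^[n] x) (H.f^[n] y) :=
  h.image_arc ▸ mem_image_of_mem _ hw

theorem InteriorAvoids.add {n k : ℕ} {x y : X} (h : H.InteriorAvoids n x y)
    (h' : H.InteriorAvoids k (H.f^[n] x) (H.f^[n] y)) : H.InteriorAvoids (k + n) x y := by
  intro j hj w hw hx hy hc
  rcases lt_or_ge j n with hjn | hnj
  · exact h j hjn w hw hx hy hc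
  · obtain ⟨i, rfl⟩ := Nat.exists_eq_add_of_le' hnj
    rw [Function.iterate_add_apply] at hc
    exact h' i (by lia) _ (h.iterate_mem hw) (h.injOn.ne hw (H.tree.left_mem _ _) hx)
      (h.injOn.ne hw (H.tree.right_mem _ _) hy) hc

theorem Avoids.add {n k : ℕ} {x y : X} (h : H.Avoids n x y)
    (h' : H.Avoids k (H.f^[n] x) (H.f^[n] y)) : H.Avoids (k + n) x y := by
  intro j hj w hw hc
  rcases lt_or_ge j n with hjn | hnj
  · exact h j hjn w hw hc
  · obtain ⟨i, rfl⟩ := Nat.exists_eq_add_of_le' hnj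
    rw [Function.iterate_add_apply] at hc
    exact h' i (by lia) _ (h.interior.iterate_mem hw) hc

theorem exists_first_hit {n : ℕ} {x y : X} (h : ¬ H.Avoids n x y) :
    ∃ p ∈ H.arc x y, ∃ k < n, H.f^[k] p = H.c0 ∧
      ∀ j < n, ∀ w ∈ H.arc x p, w ≠ p → H.f^[j] w ≠ H.c0 := by
  have := H.t2
  have hclosed : IsClosed (⋃ k ∈ Iio n, H.f^[k] ⁻¹' {H.c0}) :=
    (finite_Iio n).isClosed_biUnion fun k _ => isClosed_singleton.preimage (H.cont.iterate k)
  simp only [Avoids, not_forall, not_not, exists_prop] at h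
  obtain ⟨k, hk, w, hw, hwc⟩ := h
  obtain ⟨p, hp, hpS, hfirst⟩ := H.tree.exists_first_mem hclosed
    ⟨w, hw, mem_biUnion (mem_Iio.2 hk) hwc⟩
  obtain ⟨i, hi, hpi⟩ := mem_iUnion₂.1 hpS
  exact ⟨p, hp, i, hi, hpi, fun j hj v hv hvp hc =>
    hvp (hfirst v hv (mem_biUnion (mem_Iio.2 hj) hc))⟩

theorem exists_earliest_hit {n : ℕ} {x y : X} (h : ¬ H.Avoids n x y) :
    ∃ k < n, H.Avoids k x y ∧ ∃ p ∈ H.arc x y, H.f^[k] p = H.c0 ∧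
      H.InteriorAvoids (k + 1) x p ∧ H.InteriorAvoids (k + 1) p y := by
  classical
  simp only [Avoids, not_forall, not_not, exists_prop] at h
  obtain ⟨k, hk, hkc⟩ := h
  have hex : ∃ k, ∃ w ∈ H.arc x y, H.f^[k] w = H.c0 := ⟨k, hkc⟩
  have havoid : H.Avoids (Nat.find hex) x y := fun j hj w hw hc => Nat.find_min hex hj ⟨w, hw, hc⟩
  obtain ⟨p, hp, hpc⟩ := Nat.find_spec hex
  have hne : ∀ j < Nat.find hex + 1, ∀ w ∈ H.arc x y, w ≠ p → H.f^[j] w ≠ H.c0 := by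
    intro j hj w hw hwp hc
    rcases Nat.lt_succ_iff_lt_or_eq.1 hj with hlt | rfl
    · exact havoid j hlt w hw hc
    · exact hwp (havoid.interior.injOn hw hp (hc.trans hpc.symm))
  exact ⟨Nat.find hex, (Nat.find_min' hex hkc).trans_lt hk, havoid, p, hp, hpc,
    fun j hj w hw _ hwp => hne j hj w (H.tree.arc_subset_left hp hw) hwp,
    fun j hj w hw hwp _ => hne j hj w (H.tree.arc_subset_right hp hw) hwp⟩

end HubbardTree

/-! ### The action on local arms -/

namespace HubbardTree

variable {X : Type*} [TopologicalSpace X] {H : HubbardTree X}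

theorem c1_ne_c0 (H : HubbardTree X) : H.c1 ≠ H.c0 := H.crit_not_fixed

theorem interiorAvoids_one_c0 (H : HubbardTree X) (x : X) : H.InteriorAvoids 1 H.c0 x := by
  intro k hk w _ hw _
  rwa [Nat.lt_one_iff.1 hk]

theorem eq_c0_of_f_eq_c1 {x : X} (h : H.f x = H.c1) : x = H.c0 := by
  by_contra hne
  exact (H.interiorAvoids_one_c0 x).iterate_ne (Ne.symm hne) h.symm

theorem exists_nhds_avoids {n : ℕ} {x : X} (hx : ∀ k < n, H.f^[k] x ≠ H.c0) :
    ∃ V ∈ nhds x, ∀ w ∈ V, H.Avoids n x w := by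
  have := H.t2
  have hU : ⋂ k ∈ Iio n, {w | H.f^[k] w ≠ H.c0} ∈ nhds x :=
    (Filter.biInter_mem (finite_Iio n)).2 fun k hk =>
      (isOpen_ne.preimage (H.cont.iterate k)).mem_nhds (hx k hk)
  obtain ⟨V, hV, hVU⟩ := H.tree.exists_nhds_forall_arc_subset hU
  exact ⟨V, hV, fun w hw k hk v hv => mem_iInter₂.1 (hVU w hw hv) k hk⟩

theorem exists_mem_arc_avoids {n : ℕ} {x a : X} (hx : ∀ k < n, H.f^[k] x ≠ H.c0) (ha : a ≠ x) :
    ∃ p ∈ H.arc x a, p ≠ x ∧ H.Avoids n x p := by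
  obtain ⟨V, hV, hVavoid⟩ := exists_nhds_avoids hx
  obtain ⟨p, hp, hpx, hpV⟩ := H.tree.exists_mem_arc_arc_subset ha.symm hV
  exact ⟨p, hp, hpx, hVavoid p (hpV (H.tree.right_mem x p))⟩

/-- `p` lies on an arc only as one of its two ends. -/
def IsExtremal (H : HubbardTree X) (p : X) : Prop :=
  ∀ ⦃a b : X⦄, p ∈ H.arc a b → p = a ∨ p = b

theorem IsExtremal.of_f {x : X} (hx : x ≠ H.c0) (h : H.IsExtremal (H.f x)) : H.IsExtremal x := by
  intro a b hab
  by_contra! hne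
  have hx' : ∀ k < 1, H.f^[k] x ≠ H.c0 := fun k hk => by rwa [Nat.lt_one_iff.1 hk]
  obtain ⟨a', ha', ha'x, hxa'⟩ := exists_mem_arc_avoids hx' hne.1.symm
  obtain ⟨b', hb', hb'x, hxb'⟩ := exists_mem_arc_avoids hx' hne.2.symm
  have hfx : H.f x ∈ H.arc (H.f a') (H.f b') :=
    (hxa'.symm.trans hxb').interior.iterate_mem (H.tree.mem_arc_mono hab ha' hb')
  exact (h hfx).elim (hxa'.interior.iterate_ne ha'x.symm) (hxb'.interior.iterate_ne hb'x.symm)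

theorem isExtremal_c1 (H : HubbardTree X) : H.IsExtremal H.c1 := by
  have hdescend : ∀ k, H.IsExtremal (H.f^[k + 1] H.c0) → H.IsExtremal H.c1 := fun k => by
    induction k with
    | zero => exact id
    | succ k ih =>
      intro h
      rw [Function.iterate_succ_apply'] at h
      by_cases hc : H.f^[k + 1] H.c0 = H.c0
      · rwa [hc] at h
      · exact ih (h.of_f hc)
  obtain ⟨e, he, hec, -⟩ := H.tree.exists_isEndpoint_mem_arc H.c1_ne_c0
  obtain ⟨k, rfl⟩ := H.endpoints_on_orbit e he
  obtain ⟨k, rfl⟩ := Nat.exists_eq_succ_of_ne_zero (by rintro rfl; exact hec rfl : k ≠ 0)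
  exact hdescend k fun a b => H.tree.eq_or_eq_of_isEndpoint_mem_arc he

theorem exists_mem_arc_c1_three (H : HubbardTree X) {a b d : X} (ha : a ≠ H.c0) (hb : b ≠ H.c0)
    (hd : d ≠ H.c0) : ∃ u, u ≠ H.c1 ∧ u ∈ H.arc H.c1 (H.f a) ∧ u ∈ H.arc H.c1 (H.f b) ∧
      u ∈ H.arc H.c1 (H.f d) := by
  have hne : ∀ {x}, x ≠ H.c0 → H.f x ≠ H.c1 := fun hx h => hx (eq_c0_of_f_eq_c1 h)
  obtain ⟨v, hvc, hva, hvb⟩ := H.tree.exists_ne_mem_arc_mem_arc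
    (fun h => (H.isExtremal_c1 h).elim (hne ha).symm (hne hb).symm)
  obtain ⟨u, huc, huv, hud⟩ := H.tree.exists_ne_mem_arc_mem_arc
    (fun h => (H.isExtremal_c1 h).elim hvc.symm (hne hd).symm)
  exact ⟨u, huc, H.tree.arc_subset_left hva huv, H.tree.arc_subset_left hvb huv, hud⟩

theorem not_isMedian_c0 (H : HubbardTree X) {a b d : X} (ha : a ≠ H.c0) (hb : b ≠ H.c0)
    (hd : d ≠ H.c0) : ¬ IsMedian H.arc a b d H.c0 := by
  rintro ⟨hab, hbd, had⟩
  obtain ⟨u, huc, hua, hub, hud⟩ := H.exists_mem_arc_c1_three ha hb hd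
  have hpre : ∀ x, u ∈ H.arc H.c1 (H.f x) → ∃ v ∈ H.arc H.c0 x, v ≠ H.c0 ∧ H.f v = u := by
    intro x hux
    obtain ⟨v, hv, rfl⟩ : u ∈ H.f '' H.arc H.c0 x :=
      (H.interiorAvoids_one_c0 x).image_arc.symm ▸ hux
    exact ⟨v, hv, by rintro rfl; exact huc rfl, rfl⟩
  have hne : ∀ {x y v w}, H.c0 ∈ H.arc x y → v ∈ H.arc H.c0 x → w ∈ H.arc H.c0 y → v ≠ H.c0 →
      v ≠ w := by
    rintro x y v _ hxy hv hw hvc rfl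
    have hc := H.tree.mem_arc_mono hxy hv hw
    rw [H.tree.arc_self] at hc
    exact hvc hc.symm
  obtain ⟨va, hva, hvac, hfa⟩ := hpre a hua
  obtain ⟨vb, hvb, hvbc, hfb⟩ := hpre b hub
  obtain ⟨vd, hvd, -, hfd⟩ := hpre d hud
  have hvab := hne hab hva hvb hvac
  have hvbd := hne hbd hvb hvd hvbc
  have hvad := hne had hva hvd hvac
  obtain ⟨s, t, hst⟩ := H.two_preimages u
  have ha' : va = s ∨ va = t := hst hfa
  have hb' : vb = s ∨ vb = t := hst hfb
  have hd' : vd = s ∨ vd = t := hst hfd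
  grind

theorem symOf_eq_star_iff {x : X} : H.symOf x = Sym.star ↔ x = H.c0 := by
  unfold symOf
  split_ifs <;> simp_all

theorem symOf_eq_symOf_iff {x y : X} (hx : x ≠ H.c0) (hy : y ≠ H.c0) :
    H.symOf x = H.symOf y ↔ H.c0 ∉ H.arc x y := by
  have hT1 : ∀ w, w ∈ H.T1 ↔ H.c0 ∉ H.arc H.c1 w := fun w => H.tree.mem_armTo_iff H.c1_ne_c0
  have hxy : H.c0 ∈ H.arc x y → H.c0 ∈ H.arc H.c1 x ∨ H.c0 ∈ H.arc H.c1 y := fun h =>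
    (H.tree.mem_arc_or_mem_arc H.c1 h).imp_left H.tree.mem_symm
  have hc1x : H.c0 ∈ H.arc H.c1 x → H.c0 ∈ H.arc H.c1 y ∨ H.c0 ∈ H.arc x y := fun h =>
    (H.tree.mem_arc_or_mem_arc y h).imp_right H.tree.mem_symm
  have hc1y : H.c0 ∈ H.arc H.c1 y → H.c0 ∈ H.arc H.c1 x ∨ H.c0 ∈ H.arc x y :=
    H.tree.mem_arc_or_mem_arc x
  have htwo := H.not_isMedian_c0 H.c1_ne_c0 hx hy
  rw [IsMedian] at htwo
  have hTx := hT1 x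
  have hTy := hT1 y
  simp only [symOf, hx, hy, if_false]
  split_ifs <;> simp only [true_iff, false_iff, not_not] <;> tauto

theorem ne_c0_of_isBranchPt {x : X} (hx : IsBranchPt x) : x ≠ H.c0 := by
  rintro rfl
  obtain ⟨a, b, d, ha, hb, hd, hab, had, hbd⟩ := hx.exists_three_arms
  exact H.not_isMedian_c0 ha hb hd ⟨(H.tree.armTo_ne_iff ha hb).1 hab,
    (H.tree.armTo_ne_iff hb hd).1 hbd, (H.tree.armTo_ne_iff ha hd).1 had⟩

/-- The forward orbit of `x`, including `x` itself, does not meet `c₀`. -/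
def OrbitAvoids (H : HubbardTree X) (x : X) : Prop := ∀ k, H.f^[k] x ≠ H.c0

theorem OrbitAvoids.iterate {x : X} (hx : H.OrbitAvoids x) (n : ℕ) :
    H.OrbitAvoids (H.f^[n] x) := fun k => by
  rw [← Function.iterate_add_apply]
  exact hx _

theorem exists_armTo_eq_and_avoids {n : ℕ} {x : X} {C : Set X} (hx : ∀ k < n, H.f^[k] x ≠ H.c0)
    (hC : C ∈ arms x) : ∃ a, a ≠ x ∧ C = armTo x a ∧ H.Avoids n x a := by
  obtain ⟨y, hyx, rfl⟩ := exists_armTo_eq hC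
  obtain ⟨a, ha, hax, havoid⟩ := exists_mem_arc_avoids hx hyx
  exact ⟨a, hax, (H.tree.armTo_eq_of_mem_arc ha hax).symm, havoid⟩

theorem armTo_iterate_ne {n : ℕ} {x a b : X} (ha : a ≠ x) (hb : b ≠ x) (hxa : H.Avoids n x a)
    (hxb : H.Avoids n x b) (hab : armTo x a ≠ armTo x b) :
    armTo (H.f^[n] x) (H.f^[n] a) ≠ armTo (H.f^[n] x) (H.f^[n] b) :=
  (H.tree.armTo_ne_iff (hxa.interior.iterate_ne ha.symm).symm
    (hxb.interior.iterate_ne hb.symm).symm).2 <|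
      (hxa.symm.trans hxb).interior.iterate_mem ((H.tree.armTo_ne_iff ha hb).1 hab)

theorem isBranchPt_f {x : X} (hx : IsBranchPt x) : IsBranchPt (H.f x) := by
  have hx' : ∀ k < 1, H.f^[k] x ≠ H.c0 := fun k hk => by
    rw [Nat.lt_one_iff.1 hk]
    exact ne_c0_of_isBranchPt hx
  have hcard : (arms x).ncard ≤ (arms (H.f x)).ncard := by
    have : Nonempty X := ⟨x⟩
    choose! a hax hCa havoid using fun C (hC : C ∈ arms x) => exists_armTo_eq_and_avoids hx' hC
    have hne : ∀ C ∈ arms x, H.f (a C) ≠ H.f x := fun C hC =>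
      ((havoid C hC).interior.iterate_ne (hax C hC).symm).symm
    refine ncard_le_ncard_of_injOn (fun C => armTo (H.f x) (H.f (a C)))
      (fun C hC => armTo_mem_arms (hne C hC)) (fun C hC D hD h => ?_) (H.arms_finite _)
    by_contra hCD
    rw [hCa C hC, hCa D hD] at hCD
    exact armTo_iterate_ne (hax C hC) (hax D hD) (havoid C hC) (havoid D hD) hCD h
  exact le_trans hx hcard

theorem isBranchPt_iterate {x : X} (hx : IsBranchPt x) (k : ℕ) : IsBranchPt (H.f^[k] x) := by
  induction k with
  | zero => exact hx
  | succ k ih => exact Function.iterate_succ_apply' H.f k x ▸ isBranchPt_f ih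

theorem orbitAvoids_of_isBranchPt {x : X} (hx : IsBranchPt x) : H.OrbitAvoids x := fun k =>
  ne_c0_of_isBranchPt (isBranchPt_iterate hx k)

theorem mapsLocalArm_of_interiorAvoids {n : ℕ} {x t : X} (hx : ∀ k < n, H.f^[k] x ≠ H.c0)
    (ht : t ≠ x) (hxt : H.InteriorAvoids n x t) :
    MapsLocalArm H.f^[n] x (armTo x t) (armTo (H.f^[n] x) (H.f^[n] t)) := by
  obtain ⟨V, hV, hVavoid⟩ := exists_nhds_avoids hx
  obtain ⟨p, hp, hpx, hxp⟩ := exists_mem_arc_avoids hx ht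
  have hfp : H.f^[n] p ≠ H.f^[n] x := (hxp.interior.iterate_ne hpx.symm).symm
  refine ⟨armTo_mem_arms ht, armTo_mem_arms (hxt.iterate_ne ht.symm).symm, V, hV, ?_⟩
  rw [← H.tree.armTo_eq_of_mem_arc hp hpx, ← H.tree.armTo_eq_of_mem_arc (hxt.iterate_mem hp) hfp]
  rintro _ ⟨w, ⟨hwC, hwV⟩, rfl⟩
  have hxw := hVavoid w hwV
  rw [H.tree.mem_armTo_iff hpx] at hwC
  rw [H.tree.mem_armTo_iff hfp, ← (hxp.symm.trans hxw).interior.image_arc]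
  rintro ⟨v, hv, hvx⟩
  have hvx' : v = x := (H.tree.mem_arc_or_mem_arc x hv).elim
    (fun h => hxp.symm.interior.injOn h (H.tree.right_mem p x) hvx)
    (fun h => hxw.interior.injOn h (H.tree.left_mem x w) hvx)
  exact hwC (hvx' ▸ hv)

/-- The local arm at `fⁿ(x)` onto which `fⁿ` maps the local arm `C` at `x`. The union is over
exactly one set when `x` does not reach `c₀` in fewer than `n` steps. -/
def armImage (H : HubbardTree X) (n : ℕ) (x : X) (C : Set X) : Set X :=
  ⋃₀ {D | MapsLocalArm H.f^[n] x C D}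

theorem armImage_eq {n : ℕ} {x : X} {C D : Set X} (h : MapsLocalArm H.f^[n] x C D) :
    H.armImage n x C = D := by
  have hD : {D | MapsLocalArm H.f^[n] x C D} = {D} :=
    subset_antisymm (fun _ hD' => H.tree.mapsLocalArm_unique hD' h) (singleton_subset_iff.2 h)
  rw [armImage, hD, sUnion_singleton]

namespace OrbitAvoids

theorem armImage_armTo {n : ℕ} {x t : X} (hx : H.OrbitAvoids x) (ht : t ≠ x)
    (hxt : H.InteriorAvoids n x t) :
    H.armImage n x (armTo x t) = armTo (H.f^[n] x) (H.f^[n] t) :=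
  armImage_eq (mapsLocalArm_of_interiorAvoids (fun k _ => hx k) ht hxt)

theorem mapsLocalArm {n : ℕ} {x : X} {C : Set X} (hx : H.OrbitAvoids x) (hC : C ∈ arms x) :
    MapsLocalArm H.f^[n] x C (H.armImage n x C) := by
  have hx' : ∀ k < n, H.f^[k] x ≠ H.c0 := fun k _ => hx k
  obtain ⟨a, hax, rfl, havoid⟩ := exists_armTo_eq_and_avoids hx' hC
  rw [hx.armImage_armTo hax havoid.interior]
  exact mapsLocalArm_of_interiorAvoids hx' hax havoid.interior

theorem armImage_mem {n : ℕ} {x : X} {C : Set X} (hx : H.OrbitAvoids x) (hC : C ∈ arms x) :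
    H.armImage n x C ∈ arms (H.f^[n] x) :=
  (hx.mapsLocalArm hC).2.1

theorem armImage_add {n k : ℕ} {x : X} {C : Set X} (hx : H.OrbitAvoids x) (hC : C ∈ arms x) :
    H.armImage (k + n) x C = H.armImage k (H.f^[n] x) (H.armImage n x C) := by
  refine armImage_eq ?_
  rw [Function.iterate_add]
  exact (hx.mapsLocalArm hC).comp (H.cont.iterate n)
    ((hx.iterate n).mapsLocalArm (hx.armImage_mem hC))

theorem armImage_injOn {n : ℕ} {x : X} (hx : H.OrbitAvoids x) :
    InjOn (H.armImage n x) (arms x) := by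
  intro C hC D hD h
  obtain ⟨a, hax, rfl, hxa⟩ := exists_armTo_eq_and_avoids (n := n) (fun k _ => hx k) hC
  obtain ⟨b, hbx, rfl, hxb⟩ := exists_armTo_eq_and_avoids (n := n) (fun k _ => hx k) hD
  rw [hx.armImage_armTo hax hxa.interior, hx.armImage_armTo hbx hxb.interior] at h
  exact not_imp_comm.1 (armTo_iterate_ne hax hbx hxa hxb) (not_not.2 h)

end OrbitAvoids

end HubbardTree

/-! ### Expansivity and itineraries -/

namespace HubbardTree

variable {X : Type*} [TopologicalSpace X] {H : HubbardTree X}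

/-- The point `cₖ` of the critical orbit. -/
def crit (H : HubbardTree X) (k : ℕ) : X := H.f^[k] H.c0

theorem iterate_crit (H : HubbardTree X) (n k : ℕ) : H.f^[n] (H.crit k) = H.crit (n + k) :=
  (Function.iterate_add_apply _ _ _ _).symm

theorem iterate_c1 (H : HubbardTree X) (n : ℕ) : H.f^[n] H.c1 = H.crit (n + 1) :=
  H.iterate_crit n 1

theorem iterate_add_eq_crit {k : ℕ} {x : X} (hx : H.f^[k] x = H.c0) (n : ℕ) :
    H.f^[n + k] x = H.crit n := by
  rw [Function.iterate_add_apply, hx, crit]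

theorem iterate_succ_eq_c1 {k : ℕ} {x : X} (hx : H.f^[k] x = H.c0) : H.f^[k + 1] x = H.c1 := by
  rw [add_comm]
  exact iterate_add_eq_crit hx 1

theorem kneading_eq_symOf_crit (H : HubbardTree X) {k : ℕ} (hk : 1 ≤ k) :
    H.kneading k = H.symOf (H.crit k) := by
  rw [kneading, itin, H.iterate_c1, Nat.sub_add_cancel hk]

theorem symOf_iterate_c1 (H : HubbardTree X) (k : ℕ) :
    H.symOf (H.f^[k] H.c1) = H.kneading (k + 1) :=
  rfl

theorem markedPt_crit (H : HubbardTree X) (k : ℕ) : H.MarkedPt (H.crit k) := Or.inr ⟨k, rfl⟩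

theorem MarkedPt.iterate {x : X} (hx : H.MarkedPt x) (n : ℕ) : H.MarkedPt (H.f^[n] x) := by
  rcases hx with hx | ⟨k, rfl⟩
  · exact Or.inl (isBranchPt_iterate hx n)
  · exact Or.inr ⟨n + k, Function.iterate_add_apply _ _ _ _⟩

theorem MarkedPt.of_isMedian {a b c p : X} (hp : IsMedian H.arc a b c p) (ha : H.MarkedPt a)
    (hb : H.MarkedPt b) (hc : H.MarkedPt c) : H.MarkedPt p := by
  by_cases hne : a ≠ p ∧ b ≠ p ∧ c ≠ p
  · exact Or.inl (H.tree.isBranchPt_of_isMedian hne.1 hne.2.1 hne.2.2 hp)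
  · grind

theorem exists_not_avoids {x y : X} (hxy : x ≠ y) (hx : H.MarkedPt x) (hy : H.MarkedPt y) :
    ∃ n, ¬ H.Avoids n x y := by
  obtain ⟨n, w, hw, hc⟩ := H.expansive x y hxy hx hy
  exact ⟨n + 1, fun h => h n n.lt_succ_self w hw hc⟩

theorem iterate_ne_c0_of_mapsTo {N : ℕ} (hN : 1 ≤ N) {S : Set X} (hS : MapsTo H.f^[N] S S)
    (havoid : ∀ k < N, ∀ w ∈ S, H.f^[k] w ≠ H.c0) {w : X} (hw : w ∈ S) (k : ℕ) :
    H.f^[k] w ≠ H.c0 := by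
  rw [← Nat.mod_add_div k N, Function.iterate_add_apply, Function.iterate_mul]
  exact havoid _ (Nat.mod_lt _ hN) _ (hS.iterate _ hw)

theorem eq_of_arc_subset_of_mapsTo {N : ℕ} (hN : 1 ≤ N) {S : Set X} (hS : MapsTo H.f^[N] S S)
    (havoid : ∀ k < N, ∀ w ∈ S, H.f^[k] w ≠ H.c0) {x y : X} (hx : H.MarkedPt x)
    (hy : H.MarkedPt y) (hxy : H.arc x y ⊆ S) : x = y := by
  by_contra hne
  obtain ⟨n, hn⟩ := exists_not_avoids hne hx hy
  exact hn fun k _ w hw => iterate_ne_c0_of_mapsTo hN hS havoid (hxy hw) k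

theorem eq_of_avoids_of_iterate_mem {N : ℕ} (hN : 1 ≤ N) {x y : X} (h : H.Avoids N x y)
    (hx : H.MarkedPt x) (hy : H.MarkedPt y) (hNx : H.f^[N] x ∈ H.arc x y)
    (hNy : H.f^[N] y ∈ H.arc x y) : x = y :=
  eq_of_arc_subset_of_mapsTo hN
    (fun _ hw => H.tree.arc_subset hNx hNy (h.interior.iterate_mem hw)) h hx hy Subset.rfl

theorem avoids_of_forall_symOf_eq {n : ℕ} {x y : X} (hx : ∀ k < n, H.f^[k] x ≠ H.c0)
    (hxy : ∀ k < n, H.symOf (H.f^[k] x) = H.symOf (H.f^[k] y)) : H.Avoids n x y := by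
  induction n with
  | zero => exact fun k hk => absurd hk k.not_lt_zero
  | succ n ih =>
    have havoid := ih (fun k hk => hx k (by lia)) fun k hk => hxy k (by lia)
    intro k hk w hw hc
    rcases Nat.lt_succ_iff_lt_or_eq.1 hk with hlt | rfl
    · exact havoid k hlt w hw hc
    · have hy : H.f^[k] y ≠ H.c0 := fun hy => hx k hk <| by
        rw [← symOf_eq_star_iff, hxy k hk, symOf_eq_star_iff, hy]
      exact (symOf_eq_symOf_iff (hx k hk) hy).1 (hxy k hk) (hc ▸ havoid.interior.iterate_mem hw)

theorem Avoids.symOf_eq {n k : ℕ} {x y : X} (h : H.Avoids n x y) (hk : k < n) :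
    H.symOf (H.f^[k] x) = H.symOf (H.f^[k] y) := by
  rw [symOf_eq_symOf_iff (h k hk x (H.tree.left_mem x y)) (h k hk y (H.tree.right_mem x y)),
    ← (h.of_le hk.le).interior.image_arc]
  rintro ⟨w, hw, hc⟩
  exact h k hk w hw hc

theorem Avoids.symOf_ne {n : ℕ} {x y p : X} (hxy : x ≠ y) (h : H.Avoids n x y)
    (hp : p ∈ H.arc x y) (hc : H.f^[n] p = H.c0) :
    H.symOf (H.f^[n] x) ≠ H.symOf (H.f^[n] y) := by
  intro hsym
  have hne := h.interior.iterate_ne hxy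
  have hmem : H.c0 ∈ H.arc (H.f^[n] x) (H.f^[n] y) := hc ▸ h.interior.iterate_mem hp
  have hx : H.f^[n] x ≠ H.c0 := fun hx =>
    hne (hx.trans (symOf_eq_star_iff.1 (hsym ▸ symOf_eq_star_iff.2 hx)).symm)
  have hy : H.f^[n] y ≠ H.c0 := fun hy =>
    hne ((symOf_eq_star_iff.1 (hsym.trans (symOf_eq_star_iff.2 hy))).trans hy.symm)
  exact (symOf_eq_symOf_iff hx hy).1 hsym hmem

/-! ### Characteristic points -/

theorem isCharacteristic_iff {z : X} : H.IsCharacteristic z ↔ z ≠ H.c0 ∧ z ≠ H.c1 ∧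
    z ∈ H.arc H.c0 H.c1 ∧ ∀ k, H.f^[k] z ≠ z → z ∉ H.arc H.c0 (H.f^[k] z) := by
  constructor
  · rintro ⟨Cv, Cz, hCv, hCz, hne, hc1, hc0, hk⟩
    have hne1 := ne_of_mem_arm hCv hc1
    have hne0 := ne_of_mem_arm hCz hc0
    rw [eq_armTo_of_mem hCv hc1, eq_armTo_of_mem hCz hc0] at hne
    refine ⟨hne0.symm, hne1.symm, (H.tree.armTo_ne_iff hne0 hne1).1 hne.symm, fun k hkz => ?_⟩
    rw [← H.tree.mem_armTo_iff hne0, ← eq_armTo_of_mem hCz hc0]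
    exact hk k hkz
  · rintro ⟨hne0, hne1, hmem, hk⟩
    exact ⟨armTo z H.c1, armTo z H.c0, armTo_mem_arms hne1.symm, armTo_mem_arms hne0.symm,
      ((H.tree.armTo_ne_iff hne0.symm hne1.symm).2 hmem).symm, self_mem_armTo hne1.symm,
      self_mem_armTo hne0.symm, fun k hkz => (H.tree.mem_armTo_iff hne0.symm).2 (hk k hkz)⟩

namespace IsCharacteristic

variable {z : X}

theorem ne_c0 (hz : H.IsCharacteristic z) : z ≠ H.c0 := (isCharacteristic_iff.1 hz).1

theorem ne_c1 (hz : H.IsCharacteristic z) : z ≠ H.c1 := (isCharacteristic_iff.1 hz).2.1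

theorem mem_arc (hz : H.IsCharacteristic z) : z ∈ H.arc H.c0 H.c1 :=
  (isCharacteristic_iff.1 hz).2.2.1

theorem notMem_arc {k : ℕ} (hz : H.IsCharacteristic z) (hk : H.f^[k] z ≠ z) :
    z ∉ H.arc H.c0 (H.f^[k] z) :=
  (isCharacteristic_iff.1 hz).2.2.2 k hk

theorem mem_arc_iterate_c1 {k : ℕ} (hz : H.IsCharacteristic z) (hk : H.f^[k] z ≠ z) :
    z ∈ H.arc (H.f^[k] z) H.c1 :=
  (H.tree.mem_arc_or_mem_arc _ hz.mem_arc).resolve_left (hz.notMem_arc hk)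

theorem mem_arc_c1_crit_of_lt {k N : ℕ} (hz : H.IsCharacteristic z) (hNz : H.f^[N] z = z)
    (havoid : H.Avoids N z H.c1) (hN : z ∉ H.arc H.c1 (H.crit (N + 1))) (hk : k < N)
    (hkz : H.f^[k] z ≠ z) : z ∈ H.arc H.c1 (H.crit (k + 1)) := by
  by_contra hcon
  have hback : z ∈ H.arc (H.f^[k] z) (H.crit (k + 1)) :=
    (H.tree.mem_arc_or_mem_arc (H.crit (k + 1)) (hz.mem_arc_iterate_c1 hkz)).resolve_right
      fun h => hcon (H.tree.mem_symm h)
  rw [← H.iterate_c1, ← (havoid.of_le hk.le).interior.image_arc] at hback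
  obtain ⟨w, hw, hwz⟩ := hback
  have hNw : H.f^[N] w = H.f^[N - k] z := by
    rw [← hwz, ← Function.iterate_add_apply, Nat.sub_add_cancel hk.le]
  have hmem : H.f^[N - k] z ∈ H.arc z (H.crit (N + 1)) := by
    rw [← hNw, ← H.iterate_c1]
    simpa only [hNz] using havoid.interior.iterate_mem hw
  by_cases hfix : H.f^[N - k] z = z
  · have hw_eq : w = z :=
      havoid.interior.injOn hw (H.tree.left_mem _ _) ((hNw.trans hfix).trans hNz.symm)
    exact hkz (hw_eq ▸ hwz)
  · have hz' := H.tree.mem_symm (hz.mem_arc_iterate_c1 hfix)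
    exact hN (H.tree.arc_subset_left (H.tree.mem_arc_trans hz' hmem hfix) hz')

end IsCharacteristic

theorem mem_arc_iterate_of_isMedian {N : ℕ} {z c b : X} (hN : 1 ≤ N) (hz : H.MarkedPt z)
    (hc : H.MarkedPt c) (hNz : H.f^[N] z = z) (havoid : H.Avoids N z c)
    (hb : IsMedian H.arc z c (H.f^[N] c) b) (hbz : b ≠ z) :
    b ∈ H.arc z (H.f^[N] b) ∧ H.f^[N] b ∉ H.arc z c := by
  obtain ⟨hzc, hcc, hzc'⟩ := hb
  have hnot : H.f^[N] b ∉ H.arc z b := fun h =>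
    hbz.symm <| eq_of_avoids_of_iterate_mem hN (havoid.of_mem (H.tree.left_mem _ _) hzc) hz
      (MarkedPt.of_isMedian ⟨hzc, hcc, hzc'⟩ hz hc (hc.iterate N))
      (hNz.symm ▸ H.tree.left_mem _ _) h
  have hmem : H.f^[N] b ∈ H.arc z (H.f^[N] c) := by
    simpa only [hNz] using havoid.interior.iterate_mem hzc
  rw [H.tree.arc_eq_union hzc'] at hmem
  have hbeyond := hmem.resolve_left hnot
  refine ⟨H.tree.mem_arc_left_of_mem_arc_right hzc' hbeyond, fun h => ?_⟩
  rw [H.tree.arc_eq_union hzc] at h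
  have hfix : H.f^[N] b = b :=
    H.tree.eq_of_mem_arc_of_mem_arc hcc (H.tree.mem_symm (h.resolve_left hnot)) hbeyond
  exact hnot (hfix.symm ▸ H.tree.right_mem _ _)

theorem avoids_of_mem_arc_of_mem_arc_iterate {N : ℕ} {z b y : X} (hNz : H.f^[N] z = z)
    (havoid : H.Avoids N z H.c1)
    (hcrit : ∀ k, 0 < k → k < N → z ∈ H.arc H.c1 (H.crit (k + 1))) (hbz : b ≠ z)
    (hb : b ∈ H.arc z H.c1) (hbN : b ∈ H.arc z (H.f^[N] b)) (hNb : H.f^[N] b ∉ H.arc z H.c1)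
    (hby : b ∈ H.arc z y) : H.Avoids N z y := by
  by_contra hnot
  obtain ⟨p, hp, h, hh, hpc, hfirst⟩ := exists_first_hit hnot
  have hbp : b ∈ H.arc z p := (H.tree.mem_arc_or_mem_arc_of_mem hby hp).resolve_right fun hpb =>
    havoid h hh p (H.tree.arc_subset_left hb hpb) hpc
  have hNp : H.f^[N] p = H.crit (N - h) := by
    simpa only [Nat.sub_add_cancel hh.le] using iterate_add_eq_crit hpc (N - h)
  have hmem : H.f^[N] b ∈ H.arc z (H.crit (N - h)) := by
    have hinterior : H.InteriorAvoids N z p := fun j hj w hw _ hwp => hfirst j hj w hw hwp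
    simpa only [hNz, hNp] using hinterior.iterate_mem hbp
  obtain ⟨k, hk⟩ : ∃ k, N - h = k + 1 := ⟨N - h - 1, by lia⟩
  rw [hk] at hmem
  rcases Nat.eq_zero_or_pos k with rfl | hk0
  · exact hNb hmem
  · exact hbz (H.tree.eq_of_mem_arc_of_mem_arc (hcrit k hk0 (by lia)) (H.tree.mem_symm hb)
      (H.tree.arc_subset_left hmem hbN))

/- Otherwise the median of `z`, `c₁` and `c_{N+1}` is pushed away from `z` by `f^N`, and all arcs
from `z` through it would avoid `c₀` forever. -/
theorem IsCharacteristic.mem_arc_c1_crit {N : ℕ} {z : X} (hz : H.IsCharacteristic z)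
    (hbr : IsBranchPt z) (hN : 1 ≤ N) (hNz : H.f^[N] z = z) (havoid : H.Avoids N z H.c1) :
    z ∈ H.arc H.c1 (H.crit (N + 1)) := by
  induction N using Nat.strong_induction_on with
  | _ N ih =>
  by_contra hcon
  have hcrit : ∀ k, 0 < k → k < N → z ∈ H.arc H.c1 (H.crit (k + 1)) := fun k hk hkN => by
    by_cases hkz : H.f^[k] z = z
    · exact ih k hkN hk hkz (havoid.of_le hkN.le)
    · exact hz.mem_arc_c1_crit_of_lt hNz havoid hcon hkN hkz
  obtain ⟨b, hb⟩ := H.tree.exists_median z H.c1 (H.crit (N + 1))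
  have hbz : b ≠ z := by
    rintro rfl
    exact hcon hb.2.1
  obtain ⟨hbN, hNb⟩ := mem_arc_iterate_of_isMedian hN (Or.inl hbr) (H.markedPt_crit 1) hNz havoid
    ((H.iterate_c1 N).symm ▸ hb) hbz
  have hall : ∀ y, b ∈ H.arc z y → H.Avoids N z y := fun y =>
    avoids_of_mem_arc_of_mem_arc_iterate hNz havoid hcrit hbz hb.1 hbN hNb
  have hstep : ∀ w y, b ∈ H.arc z y → w ∈ H.arc z y → H.f^[N] w ∈ H.arc z (H.f^[N] y) :=
    fun w y hy hw => by simpa only [hNz] using (hall y hy).interior.iterate_mem hw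
  refine hz.ne_c1 (eq_of_arc_subset_of_mapsTo hN (S := {w | ∃ y, b ∈ H.arc z y ∧ w ∈ H.arc z y})
    ?_ ?_ (Or.inl hbr) (H.markedPt_crit 1) fun w hw => ⟨H.c1, hb.1, hw⟩)
  · rintro w ⟨y, hy, hw⟩
    exact ⟨H.f^[N] y, H.tree.arc_subset_left (hstep b y hy hy) hbN, hstep w y hy hw⟩
  · rintro k hk w ⟨y, hy, hw⟩
    exact hall y hy k hk w hw

end HubbardTree

/-! ### The function `ρ` and its orbits -/

theorem rho_eq_coe_iff {ν : ℕ → Sym} {n R : ℕ} :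
    rho ν n = (R : ℕ∞) ↔ ∃ k, R = n + k + 1 ∧ ν (n + k + 1) ≠ ν (k + 1) ∧
      ∀ i < k, ν (n + i + 1) = ν (i + 1) := by
  have shift : ∀ k, n + k + 1 - n = k + 1 := by lia
  constructor
  · intro hR
    have hne : {e : ℕ∞ | ∃ j : ℕ, e = j ∧ n < j ∧ ν j ≠ ν (j - n)}.Nonempty := by
      by_contra hempty
      rw [rho, not_nonempty_iff_eq_empty.1 hempty, sInf_empty] at hR
      exact ENat.natCast_ne_top _ hR.symm
    obtain ⟨j, hj, hnj, hdiff⟩ := csInf_mem hne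
    obtain rfl : R = j := by exact_mod_cast hR.symm.trans hj
    obtain ⟨k, rfl⟩ : ∃ k, R = n + k + 1 := ⟨R - n - 1, by lia⟩
    refine ⟨k, rfl, by rwa [shift] at hdiff, fun i hi => ?_⟩
    by_contra hdiff'
    have hle : rho ν n ≤ (n + i + 1 : ℕ) := sInf_le ⟨_, rfl, by lia, by rwa [shift]⟩
    rw [hR, Nat.cast_le] at hle
    lia
  · rintro ⟨k, rfl, hdiff, heq⟩
    refine le_antisymm (sInf_le ⟨_, rfl, by lia, by rwa [shift]⟩) (le_sInf ?_)
    rintro _ ⟨j, rfl, hnj, hj⟩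
    rw [Nat.cast_le]
    by_contra! hlt
    obtain ⟨i, rfl⟩ : ∃ i, j = n + i + 1 := ⟨j - n - 1, by lia⟩
    exact hj (by rw [shift]; exact heq i (by lia))

theorem lt_of_rho_eq {ν : ℕ → Sym} {n R : ℕ} (h : rho ν n = (R : ℕ∞)) : n < R := by
  obtain ⟨k, rfl, -⟩ := rho_eq_coe_iff.1 h
  lia

theorem RhoOrbit.le {ν : ℕ → Sym} {k m : ℕ} (h : RhoOrbit ν k m) : k ≤ m := by
  induction h with
  | refl => exact le_rfl
  | step _ hrho ih => exact ih.trans (lt_of_rho_eq hrho).le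

theorem RhoOrbit.head {ν : ℕ → Sym} {k j m : ℕ} (hkj : rho ν k = (j : ℕ∞))
    (h : RhoOrbit ν j m) : RhoOrbit ν k m := by
  induction h with
  | refl => exact .step (.refl k) hkj
  | step _ hrho ih => exact .step ih hrho

theorem RhoOrbit.eq_or_exists_rho_eq {ν : ℕ → Sym} {k m : ℕ} (h : RhoOrbit ν k m) :
    k = m ∨ ∃ j : ℕ, rho ν k = (j : ℕ∞) ∧ RhoOrbit ν j m := by
  induction h with
  | refl => exact .inl rfl
  | @step m' j _ hrho ih =>
    rcases ih with rfl | ⟨i, hi, hij⟩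
    · exact .inr ⟨j, hrho, .refl j⟩
    · exact .inr ⟨i, hi, .step hij hrho⟩

theorem rhoOrbit_iff_of_rho_eq {ν : ℕ → Sym} {k j m : ℕ} (hkm : k ≠ m)
    (hkj : rho ν k = (j : ℕ∞)) : RhoOrbit ν k m ↔ RhoOrbit ν j m := by
  refine ⟨fun h => ?_, .head hkj⟩
  obtain ⟨i, hki, hi⟩ := h.eq_or_exists_rho_eq.resolve_left hkm
  obtain rfl : j = i := by exact_mod_cast hkj.symm.trans hki
  exact hi

open Function in
theorem ncard_eq_of_isLeast {α : Type*} {S : Set α} {σ : α → α} {c : α} {q : ℕ}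
    (hmem : ∀ j, σ^[j] c ∈ S) (hreach : ∀ s ∈ S, ∃ j, σ^[j] c = s)
    (hq : IsLeast {j | 0 < j ∧ σ^[j] c = c} q) : S.ncard = q := by
  obtain ⟨⟨hq0, hper⟩, hleast⟩ := hq
  have hper' : IsPeriodicPt σ q c := hper
  have hperiod : minimalPeriod σ c = q := (hper'.minimalPeriod_le hq0).antisymm
    (hleast ⟨hper'.minimalPeriod_pos hq0, isPeriodicPt_minimalPeriod σ c⟩)
  have himage : S = (σ^[·] c) '' Iio q := by
    refine Subset.antisymm (fun s hs => ?_) (image_subset_iff.2 fun j _ => hmem j)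
    obtain ⟨j, rfl⟩ := hreach s hs
    refine ⟨j % q, Nat.mod_lt _ hq0, ?_⟩
    simp only [← hperiod, iterate_mod_minimalPeriod_eq]
  have hinj : InjOn (σ^[·] c) (Iio q) := hperiod ▸ iterate_injOn_Iio_minimalPeriod
  rw [himage, hinj.ncard_image, ncard_Iio_nat]

/-! ### The first return map on the arms of a characteristic branch point -/

namespace HubbardTree

variable {X : Type*} [TopologicalSpace X] {H : HubbardTree X}

/-- The critical point lies on `f^n([x, y])`, but on none of the previous images of the arc. -/
def FirstHits (H : HubbardTree X) (n : ℕ) (x y : X) : Prop :=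
  H.Avoids n x y ∧ ∃ p ∈ H.arc x y, H.f^[n] p = H.c0

theorem exists_firstHits_lt {n : ℕ} {x y : X} (h : ¬ H.Avoids n x y) :
    ∃ k < n, H.FirstHits k x y := by
  obtain ⟨k, hk, havoid, p, hp, hpc, -⟩ := exists_earliest_hit h
  exact ⟨k, hk, havoid, p, hp, hpc⟩

theorem exists_firstHits {x y : X} (hxy : x ≠ y) (hx : H.MarkedPt x) (hy : H.MarkedPt y) :
    ∃ n, H.FirstHits n x y := by
  obtain ⟨n, hn⟩ := exists_not_avoids hxy hx hy
  obtain ⟨k, -, hk⟩ := exists_firstHits_lt hn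
  exact ⟨k, hk⟩

theorem FirstHits.exists_interiorAvoids {n : ℕ} {x y : X} (h : H.FirstHits n x y) :
    ∃ p ∈ H.arc x y, H.f^[n] p = H.c0 ∧ H.InteriorAvoids (n + 1) x p := by
  obtain ⟨havoid, p, hp, hpc⟩ := h
  refine ⟨p, hp, hpc, fun k hk w hw _ hwp hwc => ?_⟩
  have hw' := H.tree.arc_subset_left hp hw
  rcases Nat.lt_succ_iff_lt_or_eq.1 hk with hlt | rfl
  · exact havoid k hlt w hw' hwc
  · exact hwp (havoid.interior.injOn hw' hp (hwc.trans hpc.symm))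

theorem FirstHits.armImage_armTo {n : ℕ} {x y : X} (h : H.FirstHits n x y)
    (hx : H.OrbitAvoids x) :
    H.armImage (n + 1) x (armTo x y) = armTo (H.f^[n + 1] x) H.c1 := by
  obtain ⟨p, hp, hpc, hinterior⟩ := h.exists_interiorAvoids
  have hpx : p ≠ x := by
    rintro rfl
    exact hx n hpc
  rw [← H.tree.armTo_eq_of_mem_arc hp hpx, hx.armImage_armTo hpx hinterior, iterate_succ_eq_c1 hpc]

theorem FirstHits.rho_kneading_eq {x : X} {s k : ℕ} (h : H.FirstHits k x H.c1) (hx : x ≠ H.c1)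
    (hsym : ∀ i ≤ k, H.symOf (H.f^[i] x) = H.kneading (s + i + 1)) :
    rho H.kneading s = ((s + k + 1 : ℕ) : ℕ∞) := by
  obtain ⟨havoid, p, hp, hpc⟩ := h
  refine rho_eq_coe_iff.2 ⟨k, rfl, ?_, fun i hi => ?_⟩
  · rw [← hsym k le_rfl]
    exact havoid.symOf_ne hx hp hpc
  · rw [← hsym i hi.le]
    exact havoid.symOf_eq hi

theorem Avoids.symOf_iterate_iterate {z : X} {m r i : ℕ} (h : H.Avoids m z H.c1) (hi : i < m - r) :
    H.symOf (H.f^[i] (H.f^[r] z)) = H.kneading (r + i + 1) := by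
  rw [← Function.iterate_add_apply, h.symOf_eq (by lia), symOf_iterate_c1, add_comm i r]

theorem OrbitAvoids.iterate_ne_c1 {x : X} {n : ℕ} (hx : H.OrbitAvoids x) (hn : 1 ≤ n) :
    H.f^[n] x ≠ H.c1 := by
  obtain ⟨k, rfl⟩ := Nat.exists_eq_add_of_le' hn
  rw [Function.iterate_succ_apply']
  exact fun h => hx k (eq_c0_of_f_eq_c1 h)

theorem OrbitAvoids.armImage_zero {x : X} {C : Set X} (hx : H.OrbitAvoids x) (hC : C ∈ arms x) :
    H.armImage 0 x C = C := by
  obtain ⟨t, ht, rfl⟩ := exists_armTo_eq hC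
  exact hx.armImage_armTo ht fun k hk => absurd hk k.not_lt_zero

/-- `z` is a characteristic periodic branch point of exact period `m`. -/
structure IsCharBranchPt (H : HubbardTree X) (z : X) (m : ℕ) : Prop where
  isBranchPt : IsBranchPt z
  isCharacteristic : H.IsCharacteristic z
  exactPeriod : ExactPeriod H.f z m

/-- The image under `f^(m-r)` of the local arm at `f^r(z)` pointing to `c₁`. When `z` has period
`m ≥ r` this is again a local arm at `z`. -/
noncomputable def returnArm (H : HubbardTree X) (m : ℕ) (z : X) (r : ℕ) : Set X :=
  H.armImage (m - r) (H.f^[r] z) (armTo (H.f^[r] z) H.c1)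

namespace IsCharBranchPt

variable {z : X} {m : ℕ}

theorem pos (h : H.IsCharBranchPt z m) : 1 ≤ m := h.exactPeriod.1

theorem iterate_eq (h : H.IsCharBranchPt z m) : H.f^[m] z = z := h.exactPeriod.2.1

theorem orbitAvoids (h : H.IsCharBranchPt z m) : H.OrbitAvoids z :=
  orbitAvoids_of_isBranchPt h.isBranchPt

theorem armTo_c0_mem (h : H.IsCharBranchPt z m) : armTo z H.c0 ∈ arms z :=
  armTo_mem_arms h.isCharacteristic.ne_c0.symm

theorem armTo_c1_mem (h : H.IsCharBranchPt z m) : armTo z H.c1 ∈ arms z :=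
  armTo_mem_arms h.isCharacteristic.ne_c1.symm

theorem armTo_c0_ne_armTo_c1 (h : H.IsCharBranchPt z m) : armTo z H.c0 ≠ armTo z H.c1 :=
  (H.tree.armTo_ne_iff h.isCharacteristic.ne_c0.symm h.isCharacteristic.ne_c1.symm).2
    h.isCharacteristic.mem_arc

theorem iterate_mul (h : H.IsCharBranchPt z m) (j : ℕ) : H.f^[m * j] z = z := by
  rw [Function.iterate_mul]
  exact Function.iterate_fixed h.iterate_eq j

theorem iterate_add_mul (h : H.IsCharBranchPt z m) (i j : ℕ) :
    H.f^[i + m * j] z = H.f^[i] z := by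
  rw [Function.iterate_add_apply, h.iterate_mul]

theorem armImage_mem (h : H.IsCharBranchPt z m) : MapsTo (H.armImage m z) (arms z) (arms z) :=
  fun _ hC => by simpa only [h.iterate_eq] using h.orbitAvoids.armImage_mem (n := m) hC

theorem armImage_mul (h : H.IsCharBranchPt z m) {C : Set X} (hC : C ∈ arms z) (j : ℕ) :
    H.armImage (m * j) z C = (H.armImage m z)^[j] C := by
  induction j with
  | zero => exact h.orbitAvoids.armImage_zero hC
  | succ j ih =>
    rw [Nat.mul_succ, add_comm, h.orbitAvoids.armImage_add hC, h.iterate_mul,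
      Function.iterate_succ_apply', ih]

theorem returnArm_self (h : H.IsCharBranchPt z m) : H.returnArm m z m = armTo z H.c1 := by
  rw [returnArm, Nat.sub_self, h.iterate_eq, h.orbitAvoids.armImage_zero h.armTo_c1_mem]

theorem returnArm_eq_of_avoids (h : H.IsCharBranchPt z m) {r : ℕ} (hr : 1 ≤ r) (hrm : r < m)
    (havoid : H.Avoids (m - r) (H.f^[r] z) H.c1) : H.returnArm m z r = armTo z H.c0 := by
  have hchar := h.isCharacteristic
  have hreturn : H.f^[m - r] (H.f^[r] z) = z := by
    rw [← Function.iterate_add_apply, Nat.sub_add_cancel hrm.le, h.iterate_eq]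
  have hne : H.f^[m - r] z ≠ z := h.exactPeriod.2.2 _ (by lia) (by lia)
  have hmem : H.f^[m - r] z ∈ H.arc z (H.f^[m - r] H.c1) := by
    have hz := hchar.mem_arc_iterate_c1 (h.exactPeriod.2.2 r hr hrm)
    simpa only [hreturn] using havoid.interior.iterate_mem hz
  rw [returnArm, (h.orbitAvoids.iterate r).armImage_armTo (h.orbitAvoids.iterate_ne_c1 hr).symm
    havoid.interior, hreturn, ← H.tree.armTo_eq_of_mem_arc hmem hne,
    H.tree.armTo_eq_iff hne hchar.ne_c0.symm]
  exact fun hz => hchar.notMem_arc hne (H.tree.mem_symm hz)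

theorem returnArm_eq_of_firstHits (h : H.IsCharBranchPt z m) {r k : ℕ} (hr : 1 ≤ r)
    (hrm : r + k + 1 ≤ m) (hhit : H.FirstHits k (H.f^[r] z) H.c1) :
    H.returnArm m z r = H.returnArm m z (r + k + 1) := by
  have hav := h.orbitAvoids.iterate r
  rw [returnArm, show m - r = (m - (r + k + 1)) + (k + 1) by lia,
    hav.armImage_add (armTo_mem_arms (h.orbitAvoids.iterate_ne_c1 hr).symm),
    hhit.armImage_armTo hav, ← Function.iterate_add_apply, show k + 1 + r = r + k + 1 by lia,
    returnArm]

theorem returnArm_eq_or (h : H.IsCharBranchPt z m) {r : ℕ} (hr : 1 ≤ r) (hrm : r ≤ m) :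
    H.returnArm m z r = armTo z H.c1 ∨ H.returnArm m z r = armTo z H.c0 := by
  induction hd : m - r using Nat.strong_induction_on generalizing r with
  | _ d ih =>
  rcases hrm.eq_or_lt with rfl | hlt
  · exact .inl h.returnArm_self
  by_cases havoid : H.Avoids (m - r) (H.f^[r] z) H.c1
  · exact .inr (h.returnArm_eq_of_avoids hr hlt havoid)
  · obtain ⟨k, hk, hhit⟩ := exists_firstHits_lt havoid
    rw [h.returnArm_eq_of_firstHits hr (by lia) hhit]
    exact ih _ (by lia) (by lia) (by lia) rfl

theorem returnArm_eq_armTo_c1_iff (h : H.IsCharBranchPt z m) (hzm : H.Avoids m z H.c1) {r : ℕ}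
    (hr : 1 ≤ r) (hrm : r ≤ m) :
    H.returnArm m z r = armTo z H.c1 ↔ RhoOrbit H.kneading r m := by
  induction hd : m - r using Nat.strong_induction_on generalizing r with
  | _ d ih =>
  rcases hrm.eq_or_lt with rfl | hlt
  · exact iff_of_true h.returnArm_self (.refl _)
  by_cases havoid : H.Avoids (m - r) (H.f^[r] z) H.c1
  · rw [h.returnArm_eq_of_avoids hr hlt havoid]
    refine iff_of_false h.armTo_c0_ne_armTo_c1 fun horbit => ?_
    obtain ⟨j, hj, hjm⟩ := horbit.eq_or_exists_rho_eq.resolve_left hlt.ne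
    obtain ⟨k, rfl, hne, -⟩ := rho_eq_coe_iff.1 hj
    have hk : k < m - r := by have := hjm.le; lia
    exact hne ((hzm.symOf_iterate_iterate hk).symm.trans (havoid.symOf_eq hk))
  · obtain ⟨k, hk, hhit⟩ := exists_firstHits_lt havoid
    rw [h.returnArm_eq_of_firstHits hr (by lia) hhit, ih _ (by lia) (by lia) (by lia) rfl]
    refine (rhoOrbit_iff_of_rho_eq hlt.ne ?_).symm
    exact hhit.rho_kneading_eq (h.orbitAvoids.iterate_ne_c1 hr) fun i hi =>
      hzm.symOf_iterate_iterate (by lia)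

theorem armImage_armTo_c0 (h : H.IsCharBranchPt z m) :
    H.armImage m z (armTo z H.c0) = H.returnArm m z 1 := by
  conv_lhs => rw [← Nat.sub_add_cancel h.pos]
  rw [h.orbitAvoids.armImage_add h.armTo_c0_mem,
    h.orbitAvoids.armImage_armTo h.isCharacteristic.ne_c0.symm (H.interiorAvoids_one_c0 z).symm]
  rfl

theorem iterate_armImage_armTo (h : H.IsCharBranchPt z m) {n a r : ℕ} {y : X} (hy : y ≠ z)
    (hhit : H.FirstHits n z y) (hrm : r ≤ m) (hn : n + 1 = r + m * a) :
    (H.armImage m z)^[a + 1] (armTo z y) = H.returnArm m z r := by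
  rw [← h.armImage_mul (armTo_mem_arms hy),
    show m * (a + 1) = (m - r) + (n + 1) by rw [Nat.mul_succ]; lia,
    h.orbitAvoids.armImage_add (armTo_mem_arms hy), hhit.armImage_armTo h.orbitAvoids, hn,
    h.iterate_add_mul, returnArm]

theorem iterate_armImage_armTo_c1_ne (h : H.IsCharBranchPt z m) {j : ℕ} (hj : 0 < j)
    (havoid : H.Avoids (m * j) z H.c1) :
    (H.armImage m z)^[j] (armTo z H.c1) ≠ armTo z H.c1 := by
  have hne1 := h.isCharacteristic.ne_c1
  rw [← h.armImage_mul h.armTo_c1_mem, h.orbitAvoids.armImage_armTo hne1.symm havoid.interior,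
    h.iterate_mul, H.iterate_c1]
  have hne : H.crit (m * j + 1) ≠ z := by
    rw [← H.iterate_c1]
    exact fun hz => havoid.interior.iterate_ne hne1 ((h.iterate_mul j).trans hz.symm)
  rw [H.tree.armTo_ne_iff hne hne1.symm]
  exact H.tree.mem_symm (h.isCharacteristic.mem_arc_c1_crit h.isBranchPt
    (Nat.mul_pos h.pos hj) (h.iterate_mul j) havoid)

theorem exists_firstHits_and_rho_eq (h : H.IsCharBranchPt z m) (havoid : H.Avoids m z H.c1) :
    ∃ n, m ≤ n ∧ H.FirstHits n z H.c1 ∧ rho H.kneading m = ((n + 1 : ℕ) : ℕ∞) := by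
  obtain ⟨n, hhit⟩ := exists_firstHits h.isCharacteristic.ne_c1 (.inl h.isBranchPt)
    (H.markedPt_crit 1)
  obtain ⟨hn, p, hp, hpc⟩ := hhit
  obtain ⟨k, rfl⟩ : ∃ k, n = k + m * 1 := by
    refine ⟨n - m, ?_⟩
    have : ¬ n < m := fun hlt => havoid n hlt p hp hpc
    lia
  have hsymz : ∀ i ≤ k, H.symOf (H.f^[i + m * 1] z) = H.kneading (i + 1) := fun i hi => by
    have := h.pos
    rw [h.iterate_add_mul]
    exact hn.symOf_eq (by lia)
  refine ⟨_, by lia, ⟨hn, p, hp, hpc⟩, rho_eq_coe_iff.2 ⟨k, by lia, ?_, fun i hi => ?_⟩⟩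
  · rw [← hsymz k le_rfl, show m + k + 1 = k + m * 1 + 1 by lia]
    exact (hn.symOf_ne h.isCharacteristic.ne_c1 hp hpc).symm
  · rw [← hsymz i hi.le, show m + i + 1 = i + m * 1 + 1 by lia]
    exact (hn.symOf_eq (by lia)).symm

theorem isLeast_qArms (h : H.IsCharBranchPt z m) (havoid : H.Avoids m z H.c1)
    (hc0 : H.armImage m z (armTo z H.c0) = armTo z H.c1) {R r : ℕ}
    (hR : rho H.kneading m = (R : ℕ∞)) (hr : 1 ≤ r) (hrm : r ≤ m) (hmod : r ≡ R [MOD m]) :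
    IsLeast {j | 0 < j ∧ (H.armImage m z)^[j] (armTo z H.c1) = armTo z H.c1}
      (qArms H.kneading m R r) := by
  obtain ⟨n, hmn, hhit, hn⟩ := h.exists_firstHits_and_rho_eq havoid
  obtain rfl : R = n + 1 := by exact_mod_cast hR.symm.trans hn
  obtain ⟨a, ha⟩ : ∃ a, n + 1 = r + m * a := by
    obtain ⟨a, ha⟩ := (Nat.modEq_iff_dvd' (by lia : r ≤ n + 1)).1 hmod
    exact ⟨a, by lia⟩
  have hdiv : (n + 1 - r) / m = a := by
    rw [ha, Nat.add_sub_cancel_left, Nat.mul_div_cancel_left a h.pos]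
  have hne : ∀ j, 0 < j → j ≤ a → (H.armImage m z)^[j] (armTo z H.c1) ≠ armTo z H.c1 :=
    fun j hj hja => h.iterate_armImage_armTo_c1_ne hj <| hhit.1.of_le <| by
      have := Nat.mul_le_mul_left m hja
      lia
  have hlast := h.iterate_armImage_armTo h.isCharacteristic.ne_c1.symm hhit hrm ha
  have hiff := h.returnArm_eq_armTo_c1_iff havoid hr hrm
  rw [qArms, hdiv]
  split_ifs with horbit
  · refine ⟨⟨a.succ_pos, hlast.trans (hiff.2 horbit)⟩, fun j ⟨hj, hjc⟩ => ?_⟩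
    by_contra! hlt
    exact hne j hj (by lia) hjc
  · have hlast' := hlast.trans ((h.returnArm_eq_or hr hrm).resolve_left fun e => horbit (hiff.1 e))
    refine ⟨⟨by lia, ?_⟩, fun j ⟨hj, hjc⟩ => ?_⟩
    · rw [Function.iterate_succ_apply', hlast', hc0]
    · by_contra! hlt
      rcases (by lia : j ≤ a ∨ j = a + 1) with hja | rfl
      · exact hne j hj hja hjc
      · exact h.armTo_c0_ne_armTo_c1 (hlast'.symm.trans hjc)

theorem ncard_arms_eq_qArms (h : H.IsCharBranchPt z m) (havoid : H.Avoids m z H.c1)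
    (hc0 : H.armImage m z (armTo z H.c0) = armTo z H.c1)
    (hreach : ∀ C ∈ arms z, ∃ j, (H.armImage m z)^[j] (armTo z H.c1) = C) {R r : ℕ}
    (hR : rho H.kneading m = (R : ℕ∞)) (hr : 1 ≤ r) (hrm : r ≤ m) (hmod : r ≡ R [MOD m]) :
    (arms z).ncard = qArms H.kneading m R r :=
  ncard_eq_of_isLeast (fun j => h.armImage_mem.iterate j h.armTo_c1_mem) hreach
    (h.isLeast_qArms havoid hc0 hR hr hrm hmod)

/- If `c₀` were hit before time `m`, the orbit of the arm towards `c₁` would consist of at most the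
two arms towards `c₀` and `c₁`. -/
theorem avoids_of_forall_exists_iterate_eq (h : H.IsCharBranchPt z m)
    (hreach : ∀ C ∈ arms z, ∃ j, (H.armImage m z)^[j] (armTo z H.c1) = C) :
    H.Avoids m z H.c1 := by
  by_contra hnot
  obtain ⟨n, hn, hhit⟩ := exists_firstHits_lt hnot
  have hc1 := h.iterate_armImage_armTo (a := 0) h.isCharacteristic.ne_c1.symm hhit hn rfl
  have hmaps : MapsTo (H.armImage m z) {armTo z H.c1, armTo z H.c0}
      {armTo z H.c1, armTo z H.c0} := by
    rintro _ (rfl | rfl)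
    · rw [← Function.iterate_one (H.armImage m z), hc1]
      exact h.returnArm_eq_or (by lia) hn
    · rw [h.armImage_armTo_c0]
      exact h.returnArm_eq_or le_rfl h.pos
  have hsub : arms z ⊆ {armTo z H.c1, armTo z H.c0} := fun C hC => by
    obtain ⟨j, rfl⟩ := hreach C hC
    exact hmaps.iterate j (.inl rfl)
  have hthree : 3 ≤ (arms z).ncard := h.isBranchPt
  have hle := ncard_le_ncard hsub (by simp)
  rw [ncard_pair h.armTo_c0_ne_armTo_c1.symm] at hle
  lia

theorem exists_iterate_armImage_eq (h : H.IsCharBranchPt z m) (ht : ArmsTransitive H.f m z)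
    {C D : Set X} (hC : C ∈ arms z) (hD : D ∈ arms z) : ∃ j, (H.armImage m z)^[j] C = D := by
  obtain ⟨j, hj⟩ := ht C hC D hD
  exact ⟨j, (h.armImage_mul hC j).symm.trans (armImage_eq hj)⟩

theorem internalAddress_and_ncard_arms_eq (h : H.IsCharBranchPt z m)
    (ht : ArmsTransitive H.f m z) : InternalAddress H.kneading m ∧
      ∀ R r : ℕ, rho H.kneading m = (R : ℕ∞) → 1 ≤ r → r ≤ m → r ≡ R [MOD m] →
        (arms z).ncard = qArms H.kneading m R r := by
  have hreach := fun C (hC : C ∈ arms z) => h.exists_iterate_armImage_eq ht h.armTo_c1_mem hC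
  have havoid := h.avoids_of_forall_exists_iterate_eq hreach
  have hc0 : H.returnArm m z 1 = armTo z H.c1 := by
    refine (h.returnArm_eq_or le_rfl h.pos).resolve_right fun hfix => ?_
    obtain ⟨j, hj⟩ := h.exists_iterate_armImage_eq ht h.armTo_c0_mem h.armTo_c1_mem
    rw [Function.iterate_fixed (h.armImage_armTo_c0.trans hfix)] at hj
    exact h.armTo_c0_ne_armTo_c1 hj
  exact ⟨(h.returnArm_eq_armTo_c1_iff havoid le_rfl h.pos).1 hc0, fun R r hR hr hrm hmod =>
    h.ncard_arms_eq_qArms havoid (h.armImage_armTo_c0.trans hc0) hreach hR hr hrm hmod⟩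

theorem exists_iterate_armImage_eq_armTo_c1 (h : H.IsCharBranchPt z m)
    (hc0 : H.armImage m z (armTo z H.c0) = armTo z H.c1) {C : Set X} (hC : C ∈ arms z) :
    ∃ j, (H.armImage m z)^[j] C = armTo z H.c1 := by
  obtain ⟨e, he, hez, rfl⟩ := H.tree.exists_isEndpoint_arm_eq hC
  obtain ⟨n, hhit⟩ := exists_firstHits hez.symm (.inl h.isBranchPt)
    (.inr (H.endpoints_on_orbit e he))
  have hlt := Nat.mod_lt n h.pos
  have hstep := h.iterate_armImage_armTo (r := n % m + 1) (a := n / m) hez hhit hlt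
    (by have := Nat.mod_add_div n m; lia)
  rcases h.returnArm_eq_or (by lia) hlt with hc1 | hc0'
  · exact ⟨_, hstep.trans hc1⟩
  · exact ⟨_ + 1, by rw [Function.iterate_succ_apply', hstep, hc0', hc0]⟩

theorem exists_iterate_armImage_armTo_c1_eq (h : H.IsCharBranchPt z m)
    (hc0 : H.armImage m z (armTo z H.c0) = armTo z H.c1) {q : ℕ} (hq : 0 < q)
    (hper : (H.armImage m z)^[q] (armTo z H.c1) = armTo z H.c1) {C : Set X} (hC : C ∈ arms z) :
    ∃ j, (H.armImage m z)^[j] (armTo z H.c1) = C := by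
  obtain ⟨j, hj⟩ := h.exists_iterate_armImage_eq_armTo_c1 hc0 hC
  have hinj : InjOn (H.armImage m z)^[j] (arms z) :=
    h.orbitAvoids.armImage_injOn.iterate h.armImage_mem j
  refine ⟨q * j - j, hinj (h.armImage_mem.iterate _ h.armTo_c1_mem) hC ?_⟩
  rw [← Function.iterate_add_apply, hj, Nat.add_sub_cancel' (Nat.le_mul_of_pos_left j hq),
    Function.iterate_mul, Function.iterate_fixed hper]

theorem armsTransitive_and_ncard_arms_eq (h : H.IsCharBranchPt z m) (havoid : H.Avoids m z H.c1)
    (hm : InternalAddress H.kneading m) {R r : ℕ} (hR : rho H.kneading m = (R : ℕ∞))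
    (hr : 1 ≤ r) (hrm : r ≤ m) (hmod : r ≡ R [MOD m]) :
    ArmsTransitive H.f m z ∧ (arms z).ncard = qArms H.kneading m R r := by
  have hc0 : H.armImage m z (armTo z H.c0) = armTo z H.c1 := by
    rw [h.armImage_armTo_c0, h.returnArm_eq_armTo_c1_iff havoid le_rfl h.pos]
    exact hm
  obtain ⟨hq, hper⟩ := (h.isLeast_qArms havoid hc0 hR hr hrm hmod).1
  have hreach := fun C (hC : C ∈ arms z) => h.exists_iterate_armImage_armTo_c1_eq hc0 hq hper hC
  refine ⟨fun C hC D hD => ?_, h.ncard_arms_eq_qArms havoid hc0 hreach hR hr hrm hmod⟩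
  obtain ⟨j, hj⟩ := h.exists_iterate_armImage_eq_armTo_c1 hc0 hC
  obtain ⟨i, hi⟩ := hreach D hD
  refine ⟨i + j, ?_⟩
  have hmaps := h.orbitAvoids.mapsLocalArm (n := m * (i + j)) hC
  rwa [h.armImage_mul hC, Function.iterate_add_apply, hj, hi] at hmaps

end IsCharBranchPt

end HubbardTree

/-! ### Closest precritical points -/

namespace HubbardTree

variable {X : Type*} [TopologicalSpace X] {H : HubbardTree X}

theorem isClosestPrecritical_succ_iff {ζ : X} {n : ℕ} :
    H.IsClosestPrecritical ζ (n + 1) ↔ H.f^[n] ζ = H.c0 ∧ H.Avoids n ζ H.c1 := by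
  constructor
  · rintro ⟨⟨-, hζ, -⟩, hfirst⟩
    rw [Function.iterate_succ_apply'] at hζ
    exact ⟨eq_c0_of_f_eq_c1 hζ, fun k hk w hw hc => hfirst (k + 1) (by lia) (by lia)
      ⟨w, H.tree.mem_symm hw, iterate_succ_eq_c1 hc⟩⟩
  · rintro ⟨hζ, havoid⟩
    have hfirst : ∀ j, 1 ≤ j → j < n + 1 → ∀ w ∈ H.arc H.c1 ζ, H.f^[j] w ≠ H.c1 := by
      intro j hj hjn w hw hc
      obtain ⟨k, rfl⟩ := Nat.exists_eq_add_of_le' hj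
      rw [Function.iterate_succ_apply'] at hc
      exact havoid k (by lia) w (H.tree.mem_symm hw) (eq_c0_of_f_eq_c1 hc)
    refine ⟨⟨by lia, iterate_succ_eq_c1 hζ, fun j hj hjn =>
      hfirst j hj hjn ζ (H.tree.right_mem _ _)⟩, ?_⟩
    rintro j hj hjn ⟨w, hw, hc⟩
    exact hfirst j hj hjn w hw hc

theorem isClosestPrecritical_c0 (H : HubbardTree X) : H.IsClosestPrecritical H.c0 1 :=
  isClosestPrecritical_succ_iff.2 ⟨rfl, fun k hk => absurd hk k.not_lt_zero⟩

namespace IsClosestPrecritical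

variable {ζ : X} {m : ℕ}

theorem pos (h : H.IsClosestPrecritical ζ m) : 1 ≤ m := h.1.1

theorem iterate_eq (h : H.IsClosestPrecritical ζ m) : H.f^[m] ζ = H.c1 := h.1.2.1

theorem exists_iterate_eq_c0 (h : H.IsClosestPrecritical ζ m) :
    ∃ n, m = n + 1 ∧ H.f^[n] ζ = H.c0 ∧ H.Avoids n ζ H.c1 := by
  obtain ⟨n, rfl⟩ := Nat.exists_eq_add_of_le' h.pos
  exact ⟨n, rfl, isClosestPrecritical_succ_iff.1 h⟩

theorem ne_c1 (h : H.IsClosestPrecritical ζ m) (hm : H.crit m ≠ H.c0) : ζ ≠ H.c1 := by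
  obtain ⟨n, rfl, hζ, -⟩ := h.exists_iterate_eq_c0
  rintro rfl
  exact hm (by rw [← H.iterate_c1, hζ])

theorem iterate_ne_c0_of_mem_arc {k : ℕ} {x : X} (h : H.IsClosestPrecritical ζ m) (hk : k < m)
    (hx : x ∈ H.arc ζ H.c1) (hxζ : x ≠ ζ) : H.f^[k] x ≠ H.c0 := by
  obtain ⟨n, rfl, hζ, havoid⟩ := h.exists_iterate_eq_c0
  intro hc
  rcases Nat.lt_succ_iff_lt_or_eq.1 hk with hlt | rfl
  · exact havoid k hlt x hx hc
  · exact hxζ (havoid.interior.injOn hx (H.tree.left_mem _ _) (hc.trans hζ.symm))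

theorem interiorAvoids {x : X} (h : H.IsClosestPrecritical ζ m) (hx : x ∈ H.arc ζ H.c1) :
    H.InteriorAvoids m ζ x :=
  fun _ hk _ hw hwζ _ => h.iterate_ne_c0_of_mem_arc hk (H.tree.arc_subset_left hx hw) hwζ

theorem avoids {x : X} (h : H.IsClosestPrecritical ζ m) (hx : x ∈ H.arc ζ H.c1) (hxζ : x ≠ ζ) :
    H.Avoids m x H.c1 := by
  intro k hk w hw
  refine h.iterate_ne_c0_of_mem_arc hk (H.tree.arc_subset_right hx hw) ?_
  rintro rfl
  exact hxζ (H.tree.mem_antisymm hx hw)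

theorem iterate_mem_arc {x : X} (h : H.IsClosestPrecritical ζ m) (hx : x ∈ H.arc ζ H.c1) :
    H.f^[m] x ∈ H.arc H.c1 (H.crit (m + 1)) := by
  rw [← h.iterate_eq, ← H.iterate_c1]
  exact (h.interiorAvoids (H.tree.right_mem _ _)).iterate_mem hx

theorem crit_ne_c1 (h : H.IsClosestPrecritical ζ m) (hζ : ζ ≠ H.c1) : H.crit (m + 1) ≠ H.c1 := by
  have hne := (h.interiorAvoids (H.tree.right_mem _ _)).iterate_ne hζ
  rw [h.iterate_eq, H.iterate_c1] at hne
  exact hne.symm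

theorem exists_of_firstHits {k : ℕ} (h : H.IsClosestPrecritical ζ m)
    (hhit : H.FirstHits k (H.crit (m + 1)) H.c1) (hk : H.crit (k + 1) ≠ H.c0) :
    ∃ ξ ∈ H.arc ζ H.c1, H.IsClosestPrecritical ξ (m + k + 1) := by
  obtain ⟨havoid, p, hp, hpc⟩ := hhit
  have himage := (h.interiorAvoids (H.tree.right_mem _ _)).image_arc
  rw [h.iterate_eq, H.iterate_c1] at himage
  obtain ⟨ξ, hξ, rfl⟩ := himage ▸ H.tree.mem_symm hp
  have hξζ : ξ ≠ ζ := by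
    rintro rfl
    exact hk (by rw [← H.iterate_c1, ← h.iterate_eq, hpc])
  rw [add_comm m k]
  refine ⟨ξ, hξ, isClosestPrecritical_succ_iff.2
    ⟨by rw [Function.iterate_add_apply, hpc], (h.avoids hξ hξζ).add ?_⟩⟩
  rw [H.iterate_c1]
  exact havoid.of_mem hp (H.tree.left_mem _ _)

end IsClosestPrecritical

theorem exists_exactPeriod_le {n : ℕ} {x : X} (hn : 1 ≤ n) (hx : H.f^[n] x = x) :
    ∃ j ≤ n, ExactPeriod H.f x j := by
  classical
  have hex : ∃ j, 1 ≤ j ∧ H.f^[j] x = x := ⟨n, hn, hx⟩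
  obtain ⟨hpos, hfix⟩ := Nat.find_spec hex
  exact ⟨Nat.find hex, Nat.find_min' hex ⟨hn, hx⟩, hpos, hfix,
    fun k hk hlt hk' => Nat.find_min hex hlt ⟨hk, hk'⟩⟩

theorem rho_kneading_ne_of_crit_eq_c0 {j : ℕ} (hj : H.crit j = H.c0) (R : ℕ) :
    rho H.kneading j ≠ (R : ℕ∞) := by
  intro hR
  obtain ⟨k, rfl, hne, -⟩ := rho_eq_coe_iff.1 hR
  refine hne ?_
  rw [H.kneading_eq_symOf_crit (by lia), H.kneading_eq_symOf_crit (by lia), add_assoc, add_comm j,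
    ← H.iterate_crit, hj]
  rfl

theorem le_of_internalAddress_of_exactPeriod_c0 {m j : ℕ}
    (hm : InternalAddress H.kneading m) (hj : ExactPeriod H.f H.c0 j) : m ≤ j := by
  obtain ⟨hj1, hjc : H.crit j = H.c0, hjmin⟩ := hj
  unfold InternalAddress at hm
  induction hm with
  | refl => exact hj1
  | @step n R hn hR ih =>
    have hnj : n ≠ j := by
      rintro rfl
      exact rho_kneading_ne_of_crit_eq_c0 hjc R hR
    obtain ⟨k, rfl, -, heq⟩ := rho_eq_coe_iff.1 hR
    by_contra! hlt
    obtain ⟨i, rfl⟩ : ∃ i, j = n + i + 1 := ⟨j - n - 1, by lia⟩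
    have hsym := heq i (by lia)
    rw [H.kneading_eq_symOf_crit (by lia), H.kneading_eq_symOf_crit (by lia),
      symOf_eq_star_iff.2 hjc, eq_comm, symOf_eq_star_iff] at hsym
    exact hjmin (i + 1) (by lia) (by have := hn.le; lia) hsym

theorem crit_ne_c0_of_internalAddress {m j : ℕ} (hm : InternalAddress H.kneading m)
    (hper : ¬ ExactPeriod H.f H.c0 m) (hj : 1 ≤ j) (hjm : j ≤ m) : H.crit j ≠ H.c0 := by
  intro hjc
  obtain ⟨i, hij, hi⟩ := exists_exactPeriod_le hj hjc
  obtain rfl : m = i := (le_of_internalAddress_of_exactPeriod_c0 hm hi).antisymm (hij.trans hjm)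
  exact hper hi

theorem avoids_crit_c1 {m R n : ℕ} (hR : rho H.kneading m = (R : ℕ∞)) (hn : m + n < R)
    (hcrit : ∀ j, 1 ≤ j → j ≤ n → H.crit j ≠ H.c0) : H.Avoids n (H.crit (m + 1)) H.c1 := by
  obtain ⟨k, rfl, -, heq⟩ := rho_eq_coe_iff.1 hR
  refine (avoids_of_forall_symOf_eq (fun i hi => ?_) fun i hi => ?_).symm
  · rw [H.iterate_c1]
    exact hcrit _ (by lia) (by lia)
  · rw [H.symOf_iterate_c1, ← heq i (by lia), H.iterate_crit, H.kneading_eq_symOf_crit (by lia)]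
    congr 2
    lia

theorem firstHits_crit_c1 {m k : ℕ} (hR : rho H.kneading m = ((m + k + 1 : ℕ) : ℕ∞))
    (hcrit : ∀ j, 1 ≤ j → j ≤ k → H.crit j ≠ H.c0) : H.FirstHits k (H.crit (m + 1)) H.c1 := by
  have havoid := avoids_crit_c1 hR (by lia) hcrit
  have hnot : ¬ H.Avoids (k + 1) (H.crit (m + 1)) H.c1 := by
    intro h
    obtain ⟨i, hi, hne, -⟩ := rho_eq_coe_iff.1 hR
    obtain rfl : k = i := by lia
    have hsym := h.symOf_eq k.lt_succ_self
    rw [H.symOf_iterate_c1, H.iterate_crit, ← H.kneading_eq_symOf_crit (by lia)] at hsym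
    exact hne (by rw [← hsym]; congr 1; lia)
  obtain ⟨i, hi, hhit⟩ := exists_firstHits_lt hnot
  rcases Nat.lt_succ_iff_lt_or_eq.1 hi with hlt | rfl
  · obtain ⟨-, p, hp, hpc⟩ := hhit
    exact absurd hpc (havoid i hlt p hp)
  · exact hhit

theorem exists_isClosestPrecritical {m : ℕ} (hm : InternalAddress H.kneading m)
    (hcrit : ∀ j, 1 ≤ j → j ≤ m → H.crit j ≠ H.c0) :
    ∃ ζ ∈ H.arc H.c0 H.c1, H.IsClosestPrecritical ζ m := by
  unfold InternalAddress at hm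
  induction hm with
  | refl => exact ⟨H.c0, H.tree.left_mem _ _, H.isClosestPrecritical_c0⟩
  | @step n R _ hR ih =>
    obtain ⟨k, rfl, -⟩ := rho_eq_coe_iff.1 hR
    obtain ⟨ζ, hζ, h⟩ := ih fun j hj hjn => hcrit j hj (by lia)
    have hn := h.pos
    obtain ⟨ξ, hξ, h'⟩ := h.exists_of_firstHits
      (firstHits_crit_c1 hR fun j hj hjk => hcrit j hj (by lia)) (hcrit _ (by lia) (by lia))
    exact ⟨ξ, H.tree.arc_subset_right hζ hξ, h'⟩

/-- Seen from `c₀`, none of the other points `ζ, f(ζ), …, f^(m-1)(ζ)` lies behind `f^k(ζ)`. -/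
def IsOutermostIterate (H : HubbardTree X) (ζ : X) (m k : ℕ) : Prop :=
  ∀ j < m, H.f^[k] ζ ∈ H.arc H.c0 (H.f^[j] ζ) → j = k

namespace IsClosestPrecritical

variable {ζ : X} {m : ℕ}

theorem injOn_iterate (h : H.IsClosestPrecritical ζ m) : InjOn (fun i => H.f^[i] ζ) (Iio m) := by
  obtain ⟨n, rfl, hζ, havoid⟩ := h.exists_iterate_eq_c0
  intro i hi j hj hij
  by_contra hne
  wlog hlt : i < j generalizing i j
  · exact this hj hi hij.symm (Ne.symm hne) (by lia)
  have hjn : j ≤ n := Nat.lt_succ_iff.1 hj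
  refine havoid (n - j + i) (by lia) ζ (H.tree.left_mem _ _) ?_
  rw [Function.iterate_add_apply]
  simp only at hij
  rw [hij, ← Function.iterate_add_apply, Nat.sub_add_cancel hjn, hζ]

theorem eq_zero_of_iterate_mem_arc {k : ℕ} (h : H.IsClosestPrecritical ζ m) (hk : k < m)
    (hmem : H.f^[k] ζ ∈ H.arc ζ H.c1) : k = 0 := by
  by_contra hk0
  have hkζ : H.f^[k] ζ ≠ ζ := fun hfix =>
    hk0 (h.injOn_iterate hk (mem_Iio.2 (by lia : 0 < m)) hfix)
  obtain ⟨n, rfl, hζ, -⟩ := h.exists_iterate_eq_c0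
  refine h.iterate_ne_c0_of_mem_arc (k := n - k) (by lia) hmem hkζ ?_
  rw [← Function.iterate_add_apply, Nat.sub_add_cancel (by lia), hζ]

theorem exists_isOutermostIterate (h : H.IsClosestPrecritical ζ m) :
    ∃ k < m, H.IsOutermostIterate ζ m k := by
  obtain ⟨k, hk, hmax⟩ := (finite_Iio m).exists_maximalFor (fun k => H.arc H.c0 (H.f^[k] ζ)) _
    ⟨0, mem_Iio.2 h.pos⟩
  refine ⟨k, hk, fun j hj hmem => h.injOn_iterate hj hk ?_⟩
  have hback := hmax (mem_Iio.2 hj) (H.tree.arc_subset_left hmem) (H.tree.right_mem _ _)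
  exact H.tree.eq_of_mem_arc_of_mem_arc hmem hback (H.tree.right_mem _ _)

theorem isOutermostIterate_of_succ {k : ℕ} (h : H.IsClosestPrecritical ζ m)
    (hζ : ζ ∈ H.arc H.c0 H.c1) (hk : k + 1 < m) (hout : H.IsOutermostIterate ζ m (k + 1)) :
    H.IsOutermostIterate ζ m k := by
  have hspine : H.f^[k + 1] ζ ∉ H.arc H.c0 H.c1 := by
    rw [H.tree.arc_eq_union hζ]
    rintro (hmem | hmem)
    · exact absurd (hout 0 (by lia) hmem) (by lia)
    · exact absurd (h.eq_zero_of_iterate_mem_arc hk hmem) (by lia)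
  intro j hj hmem
  have himage : H.f^[k + 1] ζ ∈ H.arc H.c1 (H.f^[j + 1] ζ) := by
    rw [Function.iterate_succ_apply', Function.iterate_succ_apply']
    exact (H.interiorAvoids_one_c0 _).iterate_mem hmem
  rcases H.tree.mem_arc_or_mem_arc H.c0 himage with hmem' | hmem'
  · exact absurd (H.tree.mem_symm hmem') hspine
  · rcases Nat.lt_or_ge (j + 1) m with hlt | hge
    · exact Nat.succ_injective (hout _ hlt hmem')
    · obtain rfl : m = j + 1 := by lia
      exact absurd (h.iterate_eq ▸ hmem') hspine

theorem isOutermostIterate_zero (h : H.IsClosestPrecritical ζ m) (hζ : ζ ∈ H.arc H.c0 H.c1) :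
    H.IsOutermostIterate ζ m 0 := by
  obtain ⟨k, hk, hout⟩ := h.exists_isOutermostIterate
  induction k with
  | zero => exact hout
  | succ k ih => exact ih (by lia) (h.isOutermostIterate_of_succ hζ hk hout)

theorem mem_arc_c1_iterate {k : ℕ} (h : H.IsClosestPrecritical ζ m) (hζ : ζ ∈ H.arc H.c0 H.c1)
    (hk : k < m) : ζ ∈ H.arc H.c1 (H.f^[k] ζ) := by
  rcases H.tree.mem_arc_or_mem_arc (H.f^[k] ζ) hζ with hmem | hmem
  · obtain rfl := h.isOutermostIterate_zero hζ k hk hmem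
    exact H.tree.right_mem _ _
  · exact H.tree.mem_symm hmem

theorem mem_arc_c1_iterate_of_notMem {v : X} {k : ℕ} (h : H.IsClosestPrecritical ζ m)
    (hζ : ζ ∈ H.arc H.c0 H.c1) (hv : H.InteriorAvoids m ζ v)
    (hmv : ζ ∉ H.arc H.c1 (H.f^[m] v)) (hk : 0 < k) (hkm : k < m) :
    ζ ∈ H.arc H.c1 (H.f^[k] v) := by
  refine (H.tree.mem_arc_or_mem_arc (H.f^[k] v) (h.mem_arc_c1_iterate hζ hkm)).resolve_right
    fun hback => ?_
  rw [H.tree.arc_comm, ← (hv.of_le hkm.le).image_arc] at hback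
  obtain ⟨u, hu, huζ⟩ := hback
  have hmem := hv.iterate_mem hu
  rw [h.iterate_eq, ← Nat.sub_add_cancel hkm.le, Function.iterate_add_apply _ _ _ u, huζ,
    Nat.sub_add_cancel hkm.le] at hmem
  exact hmv (H.tree.arc_subset_left hmem (h.mem_arc_c1_iterate hζ (by lia)))

theorem mem_arc_c1_crit {k : ℕ} (h : H.IsClosestPrecritical ζ m) (hζ : ζ ∈ H.arc H.c0 H.c1)
    (hm : ζ ∉ H.arc H.c1 (H.crit (m + 1))) (hk : 0 < k) (hkm : k < m) :
    ζ ∈ H.arc H.c1 (H.crit (k + 1)) := by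
  rw [← H.iterate_c1] at hm ⊢
  exact h.mem_arc_c1_iterate_of_notMem hζ (h.interiorAvoids (H.tree.right_mem _ _)) hm hk hkm

end IsClosestPrecritical

end HubbardTree

/-! ### Existence of the characteristic branch point -/

theorem three_le_qArms_cases {ν : ℕ → Sym} {m R r : ℕ} (hmR : m < R) (hr : 1 ≤ r) (hrm : r ≤ m)
    (hmod : r ≡ R [MOD m]) (hq : 3 ≤ qArms ν m R r) :
    m + m < R ∨ R = m + r ∧ r < m ∧ ¬ RhoOrbit ν r m := by
  obtain ⟨a, ha⟩ := (Nat.modEq_iff_dvd' (hrm.trans hmR.le)).1 hmod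
  rw [qArms, ha, Nat.mul_div_cancel_left a (by lia)] at hq
  have ha0 : a ≠ 0 := by
    rintro rfl
    lia
  rcases (by lia : a = 1 ∨ 2 ≤ a) with rfl | ha2
  · right
    have horbit : ¬ RhoOrbit ν r m := fun horbit => by simp [horbit] at hq
    refine ⟨by lia, lt_of_le_of_ne hrm ?_, horbit⟩
    rintro rfl
    exact horbit (.refl r)
  · left
    have := Nat.mul_le_mul_left m ha2
    lia

namespace HubbardTree

variable {X : Type*} [TopologicalSpace X] {H : HubbardTree X}

theorem isMedian_iterate {n : ℕ} {a b c x : X} (hx : IsMedian H.arc a b c x)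
    (hab : H.InteriorAvoids n a b) (hbc : H.InteriorAvoids n b c) (hac : H.InteriorAvoids n a c) :
    IsMedian H.arc (H.f^[n] a) (H.f^[n] b) (H.f^[n] c) (H.f^[n] x) :=
  ⟨hab.iterate_mem hx.1, hbc.iterate_mem hx.2.1, hac.iterate_mem hx.2.2⟩

/-- The iterate `f^N` is injective on `[ζ, b]` and moves `b` into a component of `T \ {b}` which
contains neither `ζ` nor `f^N(ζ)`. -/
structure MovesBeyond (H : HubbardTree X) (N : ℕ) (ζ b : X) : Prop where
  interiorAvoids : H.InteriorAvoids N ζ b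
  iterate_ne_c0 : ∀ k < N, H.f^[k] b ≠ H.c0
  ne : H.f^[N] b ≠ b
  mem_arc : b ∈ H.arc ζ (H.f^[N] b)
  mem_arc_iterate : b ∈ H.arc (H.f^[N] ζ) (H.f^[N] b)

namespace MovesBeyond

variable {N : ℕ} {ζ b : X}

theorem notMem_arc_iterate {y : X} (h : H.MovesBeyond N ζ b) (hby : H.InteriorAvoids N b y)
    (hy : b ∉ H.arc (H.f^[N] b) y) : b ∉ H.arc (H.f^[N] b) (H.f^[N] y) := by
  have hζy : b ∈ H.arc ζ y := (H.tree.mem_arc_or_mem_arc y h.mem_arc).resolve_right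
    fun hmem => hy (H.tree.mem_symm hmem)
  intro hcon
  exact h.ne (H.tree.eq_of_mem_arc_of_mem_arc
    ((h.interiorAvoids.trans h.iterate_ne_c0 hby).iterate_mem hζy) h.mem_arc_iterate hcon).symm

theorem avoids {y : X} (h : H.MovesBeyond N ζ b)
    (hcrit : ∀ k < N, b ∈ H.arc (H.f^[N] b) (H.crit (k + 1))) (hy : b ∉ H.arc (H.f^[N] b) y) :
    H.Avoids N b y := by
  by_contra hnot
  obtain ⟨p, hp, k, hk, hpc, hfirst⟩ := exists_first_hit hnot
  have hpb : p ≠ b := fun hpb => h.iterate_ne_c0 k hk (hpb ▸ hpc)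
  have hbp : b ∉ H.arc (H.f^[N] b) p := fun hcon =>
    (H.tree.mem_arc_or_mem_arc y hcon).elim hy fun hmem =>
      hpb (H.tree.mem_antisymm hp (H.tree.mem_symm hmem))
  obtain ⟨i, rfl⟩ : ∃ i, N = i + 1 + k := ⟨N - k - 1, by lia⟩
  refine h.notMem_arc_iterate (fun j hj w hw _ hwp => hfirst j hj w hw hwp) hbp ?_
  rw [iterate_add_eq_crit hpc]
  exact hcrit i (by lia)

/- If `b` separated `f^N(b)` from all of `c₁, …, c_N`, the component of `T \ {b}` containing
`f^N(b)` would, together with `b`, be invariant under `f^N` and avoid `c₀` forever, against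
expansivity. -/
theorem exists_notMem_arc_crit (h : H.MovesBeyond N ζ b) (hb : H.MarkedPt b)
    (hζ : ζ ∉ H.arc H.c1 (H.f^[N] b)) :
    ∃ k < N, b ∉ H.arc (H.f^[N] b) (H.crit (k + 1)) ∧ ζ ∉ H.arc H.c1 (H.crit (k + 1)) := by
  by_contra! hcon
  have hcrit : ∀ k < N, b ∈ H.arc (H.f^[N] b) (H.crit (k + 1)) := fun k hk => by
    by_contra hbk
    exact hbk (H.tree.mem_arc_of_mem_arc_of_notMem_arc (hcon k hk hbk) hζ h.mem_arc)
  have hN : 1 ≤ N := by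
    rw [Nat.one_le_iff_ne_zero]
    rintro rfl
    exact h.ne rfl
  refine h.ne (eq_of_arc_subset_of_mapsTo hN (S := insert b {y | b ∉ H.arc (H.f^[N] b) y})
    ?_ ?_ hb (hb.iterate N) fun w hw => ?_).symm
  · rintro _ (rfl | hy)
    · exact Or.inr (by simpa [H.tree.arc_self] using h.ne.symm)
    · exact Or.inr (h.notMem_arc_iterate (h.avoids hcrit hy).interior hy)
  · rintro k hk _ (rfl | hy)
    · exact h.iterate_ne_c0 k hk
    · exact h.avoids hcrit hy k hk _ (H.tree.right_mem _ _)
  · exact or_iff_not_imp_left.2 fun hwb hmem =>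
      hwb (H.tree.mem_antisymm hw (H.tree.mem_symm hmem))

end MovesBeyond

theorem markedPt_of_isMedian {ζ x : X} {m : ℕ} (hm : ζ ∉ H.arc H.c1 (H.crit (m + 1)))
    (hx : IsMedian H.arc ζ H.c1 (H.crit (m + 1)) x) : H.MarkedPt x := by
  by_cases hx1 : H.crit 1 = x
  · exact hx1 ▸ H.markedPt_crit 1
  by_cases hxm : H.crit (m + 1) = x
  · exact hxm ▸ H.markedPt_crit (m + 1)
  have hζx : ζ ≠ x := fun hζx => hm (hζx ▸ hx.2.1)
  exact Or.inl (H.tree.isBranchPt_of_isMedian hζx hx1 hxm hx)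

namespace IsClosestPrecritical

variable {ζ x : X} {m : ℕ}

theorem ne_c1_of_isFixedPt (h : H.IsClosestPrecritical ζ m)
    (hm : ζ ∉ H.arc H.c1 (H.crit (m + 1))) (hfix : H.f^[m] x = x) : x ≠ H.c1 := by
  rintro rfl
  exact h.crit_ne_c1 (fun hζ => hm (hζ ▸ H.tree.left_mem _ _)) (H.iterate_c1 m ▸ hfix)

theorem isBranchPt_of_isMedian (h : H.IsClosestPrecritical ζ m)
    (hm : ζ ∉ H.arc H.c1 (H.crit (m + 1))) (hx : IsMedian H.arc ζ H.c1 (H.crit (m + 1)) x)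
    (hfix : H.f^[m] x = x) : IsBranchPt x := by
  have hx1 : H.c1 ≠ x := (h.ne_c1_of_isFixedPt hm hfix).symm
  have hζx : ζ ≠ x := fun hζx => hm (hζx ▸ hx.2.1)
  refine H.tree.isBranchPt_of_isMedian hζx hx1 (fun hxm => hx1 ?_) hx
  refine (h.interiorAvoids (H.tree.right_mem _ _)).injOn (H.tree.right_mem _ _) hx.1 ?_
  rw [hfix, H.iterate_c1, hxm]

theorem isCharBranchPt_of_isMedian (h : H.IsClosestPrecritical ζ m) (hζ : ζ ∈ H.arc H.c0 H.c1)
    (hm : ζ ∉ H.arc H.c1 (H.crit (m + 1))) (hx : IsMedian H.arc ζ H.c1 (H.crit (m + 1)) x)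
    (hfix : H.f^[m] x = x) : H.IsCharBranchPt x m := by
  have hbr := h.isBranchPt_of_isMedian hm hx hfix
  have hxζ : x ≠ ζ := fun hxζ => hm (hxζ ▸ hx.2.1)
  have hζx : ζ ∉ H.arc H.c1 x := fun hmem => hm (H.tree.arc_subset_left hx.2.1 hmem)
  have hsep : ∀ k, 0 < k → k < m → ζ ∈ H.arc H.c1 (H.f^[k] x) := fun k =>
    h.mem_arc_c1_iterate_of_notMem hζ (h.interiorAvoids hx.1) (hfix.symm ▸ hζx)
  refine ⟨hbr, isCharacteristic_iff.2 ⟨ne_c0_of_isBranchPt hbr,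
    h.ne_c1_of_isFixedPt hm hfix, H.tree.arc_subset_right hζ hx.1, fun k hk hmem => ?_⟩,
    h.pos, hfix, fun k hk hkm hkx => ?_⟩
  · have hkm : H.f^[k] x = H.f^[k % m] x := by
      conv_lhs => rw [← Nat.mod_add_div k m]
      rw [Function.iterate_add_apply, Function.iterate_mul, Function.iterate_fixed hfix]
    rw [hkm] at hk hmem
    have hζk := hsep (k % m) (Nat.pos_of_ne_zero fun h0 => hk (by rw [h0]; rfl))
      (Nat.mod_lt _ h.pos)
    rcases H.tree.mem_arc_or_mem_arc ζ hmem with hmem | hmem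
    · exact hxζ (H.tree.eq_of_mem_arc_of_mem_arc hζ hmem hx.1)
    · exact hxζ (H.tree.eq_of_mem_arc_of_mem_arc hζk (H.tree.mem_symm hx.1) hmem)
  · exact hζx (hkx ▸ hsep k hk hkm)

end IsClosestPrecritical

theorem iterate_add_mem_arc_crit {x : X} {m : ℕ} (hcc : H.Avoids m H.c1 (H.crit (m + 1)))
    (hx : x ∈ H.arc H.c1 (H.crit (m + 1)))
    (hmem : H.f^[m] (H.f^[m] x) ∈ H.arc x (H.crit (m + 1))) :
    H.f^[m + m] (H.f^[m] x) ∈ H.arc (H.f^[m] x) (H.crit (m + (m + 1))) := by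
  rw [Function.iterate_add_apply, ← H.iterate_crit m (m + 1)]
  exact (hcc.of_mem hx (H.tree.right_mem _ _)).interior.iterate_mem hmem

namespace IsClosestPrecritical

variable {ζ x : X} {m : ℕ}

theorem iterate_eq_self_of_mem_arc_crit (h : H.IsClosestPrecritical ζ m)
    (hζ : ζ ∈ H.arc H.c0 H.c1) (hm : ζ ∉ H.arc H.c1 (H.crit (m + 1)))
    (hx : IsMedian H.arc ζ H.c1 (H.crit (m + 1)) x)
    (hmem : H.f^[m] x ∈ H.arc x (H.crit (m + 1))) : H.f^[m] x = x := by
  by_contra hne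
  have hxζ : x ≠ ζ := fun hxζ => hm (hxζ ▸ hx.2.1)
  have hx1 : x ∈ H.arc H.c1 (H.f^[m] x) := H.tree.mem_arc_left_of_mem_arc_right hx.2.1 hmem
  have hmoves : H.MovesBeyond m ζ x :=
    { interiorAvoids := h.interiorAvoids hx.1
      iterate_ne_c0 := fun k hk => h.iterate_ne_c0_of_mem_arc hk hx.1 hxζ
      ne := hne
      mem_arc := H.tree.mem_arc_left_of_mem_arc_right hx.2.2 hmem
      mem_arc_iterate := h.iterate_eq.symm ▸ hx1 }
  obtain ⟨k, hk, hxk, hζk⟩ := hmoves.exists_notMem_arc_crit (markedPt_of_isMedian hm hx)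
    fun hcon => hm (H.tree.arc_subset_left (h.iterate_mem_arc hx.1) hcon)
  rcases Nat.eq_zero_or_pos k with rfl | hk0
  · exact hxk (H.tree.mem_symm hx1)
  · exact hζk (h.mem_arc_c1_crit hζ hm hk0 hk)

theorem interiorAvoids_crit (h : H.IsClosestPrecritical ζ m)
    (hcc : H.Avoids m H.c1 (H.crit (m + 1))) : H.InteriorAvoids m ζ (H.crit (m + 1)) :=
  (h.interiorAvoids (H.tree.right_mem _ _)).trans (fun k hk => hcc k hk _ (H.tree.left_mem _ _))
    hcc.interior

theorem notMem_arc_crit (h : H.IsClosestPrecritical ζ m)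
    (hcc : H.Avoids m H.c1 (H.crit (m + 1))) : ζ ∉ H.arc H.c1 (H.crit (m + 1)) := by
  intro hmem
  obtain ⟨n, rfl, hζ, -⟩ := h.exists_iterate_eq_c0
  exact hcc n n.lt_succ_self ζ hmem hζ

theorem isMedian_iterate_of_avoids (h : H.IsClosestPrecritical ζ m)
    (hcc : H.Avoids m H.c1 (H.crit (m + 1))) (hx : IsMedian H.arc ζ H.c1 (H.crit (m + 1)) x) :
    IsMedian H.arc H.c1 (H.crit (m + 1)) (H.crit (m + (m + 1))) (H.f^[m] x) := by
  have hmed := isMedian_iterate hx (h.interiorAvoids (H.tree.right_mem _ _)) hcc.interior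
    (h.interiorAvoids_crit hcc)
  rwa [h.iterate_eq, H.iterate_c1, H.iterate_crit] at hmed

theorem notMem_arc_crit_add (h : H.IsClosestPrecritical ζ m)
    (hcc : H.Avoids m H.c1 (H.crit (m + 1))) (hx : IsMedian H.arc ζ H.c1 (H.crit (m + 1)) x)
    (hmem : H.f^[m] x ∈ H.arc H.c1 x) (hne : H.f^[m] x ≠ x) :
    ζ ∉ H.arc H.c1 (H.crit (m + (m + 1))) := by
  have hmed := h.isMedian_iterate_of_avoids hcc hx
  have hm := h.notMem_arc_crit hcc
  rw [H.tree.arc_eq_union hmed.2.2]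
  rintro (hcon | hcon)
  · exact hm (H.tree.arc_subset_left (h.iterate_mem_arc hx.1) hcon)
  · have hback := H.tree.mem_arc_of_isMedian_of_isMedian hx hmed hmem hne
    exact hm (H.tree.mem_antisymm hcon hback ▸ h.iterate_mem_arc hx.1)

theorem movesBeyond_add (h : H.IsClosestPrecritical ζ m)
    (hcc : H.Avoids m H.c1 (H.crit (m + 1))) (hx : IsMedian H.arc ζ H.c1 (H.crit (m + 1)) x)
    (hmem : H.f^[m] x ∈ H.arc H.c1 x) (hne : H.f^[m] x ≠ x)
    (hmem' : H.f^[m] (H.f^[m] x) ∈ H.arc x (H.crit (m + 1))) (hne' : H.f^[m] (H.f^[m] x) ≠ x) :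
    H.MovesBeyond (m + m) ζ (H.f^[m] x) := by
  have hmed := h.isMedian_iterate_of_avoids hcc hx
  have hxc : H.Avoids m x (H.crit (m + 1)) := hcc.of_mem hx.2.1 (H.tree.right_mem _ _)
  have hfar := iterate_add_mem_arc_crit hcc hx.2.1 hmem'
  have hζ1 : H.f^[m] x ∈ H.arc ζ H.c1 := H.tree.arc_subset_right hx.1 (H.tree.mem_symm hmem)
  have hxζ : H.f^[m] x ≠ ζ := by
    rintro heq
    exact h.notMem_arc_crit hcc (heq ▸ h.iterate_mem_arc hx.1)
  have hmem1 := H.tree.arc_subset_right hx.2.1 hmem'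
  have hself : H.Avoids (m + m) (H.f^[m] x) (H.f^[m] x) :=
    ((h.avoids hζ1 hxζ).of_mem (H.tree.left_mem _ _) (H.tree.left_mem _ _)).add
      (hcc.of_mem hmem1 hmem1)
  constructor
  · refine (h.interiorAvoids hζ1).add ?_
    rw [h.iterate_eq]
    exact (hcc.of_mem (H.tree.left_mem _ _) hmem1).interior
  · exact fun k hk => hself k hk _ (H.tree.left_mem _ _)
  · rw [Function.iterate_add_apply]
    exact hxc.interior.injOn.ne hmem' (H.tree.left_mem _ _) hne'
  · exact H.tree.mem_arc_left_of_mem_arc_right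
      (H.tree.mem_arc_of_isMedian_of_isMedian hx hmed hmem hne) hfar
  · rw [Function.iterate_add_apply _ _ _ ζ, h.iterate_eq, H.iterate_c1]
    exact H.tree.mem_arc_left_of_mem_arc_right hmed.2.1 hfar

theorem iterate_iterate_notMem_arc_crit (h : H.IsClosestPrecritical ζ m)
    (hζ : ζ ∈ H.arc H.c0 H.c1) (hcc : H.Avoids m H.c1 (H.crit (m + 1)))
    (hx : IsMedian H.arc ζ H.c1 (H.crit (m + 1)) x) (hmem : H.f^[m] x ∈ H.arc H.c1 x)
    (hne : H.f^[m] x ≠ x) (hne' : H.f^[m] (H.f^[m] x) ≠ x) :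
    H.f^[m] (H.f^[m] x) ∉ H.arc x (H.crit (m + 1)) := by
  intro hmem'
  have hm := h.notMem_arc_crit hcc
  have hm' := h.notMem_arc_crit_add hcc hx hmem hne
  have hmed := h.isMedian_iterate_of_avoids hcc hx
  have hfar := iterate_add_mem_arc_crit hcc hx.2.1 hmem'
  have hmoves := h.movesBeyond_add hcc hx hmem hne hmem' hne'
  obtain ⟨k, hk, hxk, hζk⟩ := hmoves.exists_notMem_arc_crit ((markedPt_of_isMedian hm hx).iterate m)
    fun hcon => hm' (H.tree.arc_subset_left (H.tree.arc_subset_right hmed.2.2 hfar) hcon)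
  have hk0 : 0 < k := by
    refine Nat.pos_of_ne_zero ?_
    rintro rfl
    exact hxk (H.tree.mem_symm (H.tree.mem_arc_left_of_mem_arc_right hmed.2.2 hfar))
  rcases lt_trichotomy k m with hkm | rfl | hkm
  · exact hζk (h.mem_arc_c1_crit hζ hm hk0 hkm)
  · exact hxk (H.tree.mem_symm (H.tree.mem_arc_left_of_mem_arc_right hmed.2.1 hfar))
  · obtain ⟨j, rfl⟩ := Nat.exists_eq_add_of_le' hkm.le
    have hζj := h.mem_arc_c1_iterate_of_notMem (k := j) hζ (h.interiorAvoids_crit hcc)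
      (H.iterate_crit m (m + 1) ▸ hm') (by lia) (by lia)
    rw [H.iterate_crit, ← add_assoc] at hζj
    exact hζk hζj

theorem iterate_eq_self_of_avoids (h : H.IsClosestPrecritical ζ m)
    (hζ : ζ ∈ H.arc H.c0 H.c1) (hcc : H.Avoids m H.c1 (H.crit (m + 1)))
    (hx : IsMedian H.arc ζ H.c1 (H.crit (m + 1)) x) : H.f^[m] x = x := by
  have hm := h.notMem_arc_crit hcc
  have hmx := h.iterate_mem_arc hx.1
  rw [H.tree.arc_eq_union hx.2.1] at hmx
  rcases hmx with hmem | hmem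
  · by_contra hne
    have hxm := markedPt_of_isMedian hm hx
    have havoid : H.Avoids m (H.f^[m] x) x := hcc.of_mem (h.iterate_mem_arc hx.1) hx.2.1
    have htwice : H.f^[m] (H.f^[m] x) ∉ H.arc (H.f^[m] x) x := fun hmem' =>
      hne (eq_of_avoids_of_iterate_mem h.pos havoid (hxm.iterate m) hxm hmem'
        (H.tree.left_mem _ _))
    have hne' : H.f^[m] (H.f^[m] x) ≠ x := fun heq => htwice (heq.symm ▸ H.tree.right_mem _ _)
    have himage : H.f^[m] (H.f^[m] x) ∈ H.arc (H.f^[m] x) (H.crit (m + 1)) := by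
      rw [H.tree.arc_comm, ← H.iterate_c1]
      exact (hcc.of_mem (H.tree.left_mem _ _) hx.2.1).interior.iterate_mem hmem
    have hxc : x ∈ H.arc (H.f^[m] x) (H.crit (m + 1)) :=
      H.tree.mem_arc_mono hx.2.1 (H.tree.mem_symm hmem) (H.tree.right_mem _ _)
    rw [H.tree.arc_eq_union hxc] at himage
    exact himage.elim htwice (h.iterate_iterate_notMem_arc_crit hζ hcc hx hmem hne hne')
  · exact h.iterate_eq_self_of_mem_arc_crit hζ hm hx hmem

theorem exists_interiorAvoids_of_not_rhoOrbit {p : X} {s : ℕ} (h : H.IsClosestPrecritical p s)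
    (hsm : s < m) (horbit : ¬ RhoOrbit H.kneading s m)
    (hcrit : ∀ j, 1 ≤ j → j ≤ m → H.crit j ≠ H.c0) :
    ∃ p' ∈ H.arc p H.c1, ∃ s' < m, H.IsClosestPrecritical p' s' ∧ H.InteriorAvoids m p' H.c1 := by
  by_cases havoid : H.Avoids (m - s) (H.crit (s + 1)) H.c1
  · refine ⟨p, H.tree.left_mem _ _, s, hsm, h, ?_⟩
    rw [← Nat.sub_add_cancel hsm.le]
    refine (h.interiorAvoids (H.tree.right_mem _ _)).add ?_
    rw [h.iterate_eq, H.iterate_c1]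
    exact havoid.symm.interior
  · obtain ⟨k, hk, hhit⟩ := exists_firstHits_lt havoid
    have hs := h.pos
    have hrho : rho H.kneading s = ((s + k + 1 : ℕ) : ℕ∞) := by
      refine hhit.rho_kneading_eq (h.crit_ne_c1 (h.ne_c1 (hcrit s hs hsm.le))) fun i _ => ?_
      rw [H.iterate_crit, H.kneading_eq_symOf_crit (by lia), add_left_comm, add_assoc]
    have horbit' : ¬ RhoOrbit H.kneading (s + k + 1) m := fun hcon => horbit (hcon.head hrho)
    have hne : s + k + 1 ≠ m := by
      rintro rfl
      exact horbit' (.refl _)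
    obtain ⟨ξ, hξ, h'⟩ := h.exists_of_firstHits hhit (hcrit _ (by lia) (by lia))
    obtain ⟨p', hp', hs'⟩ := h'.exists_interiorAvoids_of_not_rhoOrbit (by lia) horbit' hcrit
    exact ⟨p', H.tree.arc_subset_right hξ hp', hs'⟩
termination_by m - s

variable {p : X} {s : ℕ}

theorem notMem_arc_c1 (h : H.IsClosestPrecritical ζ m) (hp : H.IsClosestPrecritical p s)
    (hsm : s < m) : p ∉ H.arc ζ H.c1 := by
  obtain ⟨n, rfl, -, havoid⟩ := h.exists_iterate_eq_c0
  obtain ⟨k, rfl, hpc, -⟩ := hp.exists_iterate_eq_c0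
  exact fun hmem => havoid k (by lia) p hmem hpc

theorem notMem_arc_crit_of_lt (h : H.IsClosestPrecritical ζ m) (hζ : ζ ≠ H.c1)
    (hp : H.IsClosestPrecritical p s) (hsm : s < m) (hpc : p ∈ H.arc H.c1 (H.crit (m + 1)))
    (havoid : H.InteriorAvoids m p H.c1) : ζ ∉ H.arc H.c1 (H.crit (m + 1)) := by
  intro hmem
  have hpζ := h.notMem_arc_c1 hp hsm
  rcases H.tree.mem_arc_or_mem_arc_of_mem hmem hpc with hζp | hpζ'
  · obtain ⟨n, rfl, hζn, -⟩ := h.exists_iterate_eq_c0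
    refine havoid n n.lt_succ_self ζ (H.tree.mem_symm hζp) ?_ hζ hζn
    rintro rfl
    exact hpζ (H.tree.left_mem _ _)
  · exact hpζ (H.tree.mem_symm hpζ')

/- The tripod spanned by `ζ`, `c₁`, `p` is mapped by `f^m` onto the one spanned by `c₁`, `c_{m+1}`,
`c_{m-s+1}`, and both have centre `x`. -/
theorem iterate_eq_self_of_lt (h : H.IsClosestPrecritical ζ m) (hζ : ζ ∈ H.arc H.c0 H.c1)
    (hm : ζ ∉ H.arc H.c1 (H.crit (m + 1))) (hx : IsMedian H.arc ζ H.c1 (H.crit (m + 1)) x)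
    (hp : H.IsClosestPrecritical p s) (hsm : s < m) (hpc : p ∈ H.arc H.c1 (H.crit (m + 1)))
    (havoid : H.InteriorAvoids m p H.c1) (hcrit : ∀ j, 1 ≤ j → j ≤ m → H.crit j ≠ H.c0) :
    H.f^[m] x = x := by
  have hpx : p ∈ H.arc x (H.crit (m + 1)) := by
    rw [H.tree.arc_eq_union hx.2.1] at hpc
    exact hpc.resolve_left fun hmem =>
      h.notMem_arc_c1 hp hsm (H.tree.arc_subset_right hx.1 (H.tree.mem_symm hmem))
  have hxp : IsMedian H.arc ζ H.c1 p x :=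
    ⟨hx.1, H.tree.mem_arc_left_of_mem_arc_right hx.2.1 hpx,
      H.tree.mem_arc_left_of_mem_arc_right hx.2.2 hpx⟩
  have hζ1 := h.interiorAvoids (H.tree.right_mem ζ H.c1)
  have himage := isMedian_iterate hxp hζ1 havoid.symm
    (hζ1.trans (fun k hk => H.iterate_c1 k ▸ hcrit _ (by lia) (by lia)) havoid.symm)
  have hpm : H.f^[m] p = H.crit (m - s + 1) := by
    rw [← H.iterate_c1, ← hp.iterate_eq, ← Function.iterate_add_apply, Nat.sub_add_cancel hsm.le]
  rw [h.iterate_eq, H.iterate_c1, hpm] at himage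
  have hs := hp.pos
  have hζs := h.mem_arc_c1_crit (k := m - s) hζ hm (by lia) (by lia)
  refine H.tree.isMedian_unique himage ⟨hx.2.1,
    H.tree.mem_arc_of_mem_arc_of_notMem_arc hζs hm hx.2.2,
    H.tree.arc_subset_left hζs (H.tree.mem_symm hx.1)⟩

end IsClosestPrecritical

theorem exists_mem_arc_crit_interiorAvoids {m r : ℕ}
    (hR : rho H.kneading m = ((m + r : ℕ) : ℕ∞)) (hr : 1 ≤ r) (hrm : r < m)
    (horbit : ¬ RhoOrbit H.kneading r m) (hcrit : ∀ j, 1 ≤ j → j ≤ m → H.crit j ≠ H.c0) :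
    ∃ p ∈ H.arc H.c1 (H.crit (m + 1)), ∃ s < m,
      H.IsClosestPrecritical p s ∧ H.InteriorAvoids m p H.c1 := by
  obtain ⟨k, rfl⟩ := Nat.exists_eq_add_of_le' hr
  obtain ⟨havoid, p, hp, hpc⟩ := firstHits_crit_c1 hR fun j hj hjk => hcrit j hj (by lia)
  have h : H.IsClosestPrecritical p (k + 1) :=
    isClosestPrecritical_succ_iff.2 ⟨hpc, havoid.of_mem hp (H.tree.right_mem _ _)⟩
  obtain ⟨p', hp', hs⟩ := h.exists_interiorAvoids_of_not_rhoOrbit hrm horbit hcrit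
  exact ⟨p', H.tree.mem_symm (H.tree.arc_subset_right hp hp'), hs⟩

theorem exists_isCharBranchPt {m R r : ℕ} (hm : InternalAddress H.kneading m)
    (hR : rho H.kneading m = (R : ℕ∞)) (hr : 1 ≤ r) (hrm : r ≤ m) (hmod : r ≡ R [MOD m])
    (hq : 3 ≤ qArms H.kneading m R r) (hper : ¬ ExactPeriod H.f H.c0 m) :
    ∃ z, H.IsCharBranchPt z m ∧ H.Avoids m z H.c1 := by
  have hcrit : ∀ j, 1 ≤ j → j ≤ m → H.crit j ≠ H.c0 := fun j =>
    crit_ne_c0_of_internalAddress hm hper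
  obtain ⟨ζ, hζ, h⟩ := exists_isClosestPrecritical hm hcrit
  obtain ⟨x, hx⟩ := H.tree.exists_median ζ H.c1 (H.crit (m + 1))
  obtain ⟨hnot, hfix⟩ : ζ ∉ H.arc H.c1 (H.crit (m + 1)) ∧ H.f^[m] x = x := by
    rcases three_le_qArms_cases (lt_of_rho_eq hR) hr hrm hmod hq with hlt | ⟨rfl, hlt, horbit⟩
    · have hcc := (avoids_crit_c1 hR hlt hcrit).symm
      exact ⟨h.notMem_arc_crit hcc, h.iterate_eq_self_of_avoids hζ hcc hx⟩
    · obtain ⟨p, hpc, s, hsm, hp, havoid⟩ :=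
        exists_mem_arc_crit_interiorAvoids hR hr hlt horbit hcrit
      have hnot := h.notMem_arc_crit_of_lt (h.ne_c1 (hcrit m h.pos le_rfl)) hp hsm hpc havoid
      exact ⟨hnot, h.iterate_eq_self_of_lt hζ hnot hx hp hsm hpc havoid hcrit⟩
  exact ⟨x, h.isCharBranchPt_of_isMedian hζ hnot hx hfix,
    h.avoids hx.1 fun hxζ => hnot (hxζ ▸ hx.2.1)⟩

end HubbardTree

/-- Proposition 5.18, "Number of Arms at Tame Branch Points".
If `z` is a tame characteristic branch point of exact period `m`, then `m` occurs
in the internal address of the kneading sequence `ν` and the number of arms of `z`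
is `q(m)`. Conversely, for any entry `m` of the internal address with `q(m) ≥ 3`,
provided the critical orbit is not periodic of period `m`, the Hubbard tree
contains a tame branch point of exact period `m` with `q(m)` arms. -/
theorem number_of_arms_at_tame_branch_points
    {X : Type*} [TopologicalSpace X] (H : HubbardTree X) (m : ℕ) :
    (∀ z : X, IsBranchPt z → H.IsCharacteristic z → ExactPeriod H.f z m →
      ArmsTransitive H.f m z →
      InternalAddress H.kneading m ∧
      ∀ R r : ℕ, rho H.kneading m = (R : ℕ∞) → 1 ≤ r → r ≤ m → r ≡ R [MOD m] →
        (arms z).ncard = qArms H.kneading m R r) ∧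
    (∀ R r : ℕ, InternalAddress H.kneading m → rho H.kneading m = (R : ℕ∞) →
      1 ≤ r → r ≤ m → r ≡ R [MOD m] → 3 ≤ qArms H.kneading m R r →
      ¬ ExactPeriod H.f H.c0 m →
      ∃ z : X, IsBranchPt z ∧ H.IsCharacteristic z ∧ ExactPeriod H.f z m ∧
        ArmsTransitive H.f m z ∧ (arms z).ncard = qArms H.kneading m R r) := by
  constructor
  · intro z hbranch hchar hperiod htame
    exact HubbardTree.IsCharBranchPt.internalAddress_and_ncard_arms_eq ⟨hbranch, hchar, hperiod⟩
      htame
  · intro R r hm hR hr hrm hmod hq hper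
    obtain ⟨z, hz, havoid⟩ := HubbardTree.exists_isCharBranchPt hm hR hr hrm hmod hq hper
    exact ⟨z, hz.isBranchPt, hz.isCharacteristic, hz.exactPeriod,
      hz.armsTransitive_and_ncard_arms_eq havoid hm hR hr hrm hmod⟩

end HubbardTrees
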